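/- arXiv:1505.02315 — 5 statements merged into one kernel-verified Lean document; each statement's English description precedes it below -/
import Mathlib

section
/- Let U and V be finite-dimensional vector spaces over a field K with more than 2 elements, and let S be a linear subspace of L(U,V) with codim S ≤ 2·dim V − 4. Then either S has special type 1, or every quasi-range-compatible additive group homomorphism F : S → V is local. -/
/-!
Induct on `dim V`. If `S` consists of all operators that vanish at a vector `x₀`, a
quasi-range-compatible `F` maps each `f ⊗ y` to a multiple `a(f) y`, and `a` is the evaluation at
some `x`. Otherwise let `T` be the orthogonal of `S` for the trace form. Its dimension is the
codimension of `S`, passing to `S mod K y` lowers it by `dim Ty`, and a vector `x` with small `Sx`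
provides many operators of rank one in `T`. Hence, outside any proper subspace, there is a `y` such
that `S mod K y` satisfies the hypotheses again. Two such lines `K y₁`, `K y₂` yield `x₁`, `x₂` with
`F s - s xᵢ ∈ K yᵢ`. So `S (x₁ - x₂)` lies in the plane `K y₁ + K y₂`, and neither `S mod K y₁` nor
`S mod K y₂` has special type 1, which forces `S (x₁ - x₂) = 0` and `F s = s x₁`.
-/

open Module LinearMap Submodule

namespace OperatorSpace

section VectorSpace

variable {K V : Type*} [Field K] [AddCommGroup V] [Module K V]

theorem exists_forall_notMem_of_card_le {ι : Type*} {s : Finset ι} {p : ι → Submodule K V}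
    (hp : ∀ i ∈ s, p i ≠ ⊤) (hs : s.card ≤ ENat.card K) : ∃ v, ∀ i ∈ s, v ∉ p i := by
  classical
  induction s using Finset.induction_on with
  | empty => exact ⟨0, by simp⟩
  | insert j s hj ih =>
    rw [Finset.card_insert_of_notMem hj] at hs
    simp only [Finset.mem_insert, forall_eq_or_imp] at hp ⊢
    obtain ⟨v, hv⟩ := ih hp.2 (le_trans (by simp) hs)
    by_cases hvj : v ∉ p j
    · exact ⟨v, hvj, hv⟩
    obtain ⟨u, -, hu⟩ := SetLike.exists_of_lt hp.1.lt_top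
    suffices ∃ c : K, ∀ i ∈ s, u + c • v ∉ p i by
      obtain ⟨c, hc⟩ := this
      refine ⟨u + c • v, fun h ↦ hu ?_, hc⟩
      exact ((p j).add_mem_iff_left ((p j).smul_mem c (not_not.1 hvj))).1 h
    -- The line `u + K v` meets each `p i` in at most one point, so it has too many points.
    by_contra! hline
    choose i his hi using hline
    have hinj : Function.Injective fun c ↦ (⟨i c, his c⟩ : s) := by
      intro a b hab
      have hab : i a = i b := congrArg Subtype.val hab
      by_contra hne
      have hsub := (p (i a)).sub_mem (hi a) (hab ▸ hi b)
      rw [add_sub_add_left_eq_sub, ← sub_smul, smul_mem_iff _ (sub_ne_zero.2 hne)] at hsub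
      exact hv _ (his a) hsub
    have hcard := hs.trans (ENat.card_le_card_of_injective hinj)
    simp only [ENat.card_eq_coe_fintype_card, Fintype.card_coe] at hcard
    norm_cast at hcard
    omega

theorem exists_notMem_of_ne_top (hK : 3 ≤ ENat.card K) {A B C : Submodule K V}
    (hA : A ≠ ⊤) (hB : B ≠ ⊤) (hC : C ≠ ⊤) : ∃ v, v ∉ A ∧ v ∉ B ∧ v ∉ C := by
  obtain ⟨v, hv⟩ := exists_forall_notMem_of_card_le (K := K) (s := Finset.univ) (p := ![A, B, C])
    (by simp [Fin.forall_fin_succ, hA, hB, hC]) (by simpa using hK)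
  exact ⟨v, by simpa [Fin.forall_fin_succ] using hv⟩

theorem finrank_le_one_of_le_span_singleton {W : Submodule K V} {w : V} (hW : W ≤ span K {w}) :
    finrank K W ≤ 1 :=
  (finrank_mono hW).trans ((finrank_span_le_card {w}).trans_eq (Set.toFinset_card _))

theorem le_span_singleton_of_finrank_le_one [FiniteDimensional K V] {W : Submodule K V}
    (hW : finrank K W ≤ 1) {w : V} (hw : w ∈ W) (hw0 : w ≠ 0) : W ≤ span K {w} :=
  (eq_of_le_of_finrank_le ((span_singleton_le_iff_mem _ _).2 hw)
    (by rwa [finrank_span_singleton hw0])).ge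

theorem finrank_quotient_span_singleton_add_one [FiniteDimensional K V] {y : V} (hy : y ≠ 0) :
    finrank K (V ⧸ span K {y}) + 1 = finrank K V := by
  rw [← finrank_span_singleton (K := K) hy, finrank_quotient_add_finrank]

theorem finrank_map_add_finrank_inf_ker {V' : Type*} [AddCommGroup V'] [Module K V']
    [FiniteDimensional K V] (f : V →ₗ[K] V') (W : Submodule K V) :
    finrank K (W.map f) + finrank K (W ⊓ ker f : Submodule K V) = finrank K W := by
  have hker : (ker (f.domRestrict W)).map W.subtype = W ⊓ ker f := by
    rw [ker_domRestrict, map_comap_subtype]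
  rw [← hker, finrank_map_subtype_eq, ← range_domRestrict, finrank_range_add_finrank_ker]

theorem exists_eq_smulRight_of_forall_mem_span_singleton {V' : Type*} [AddCommGroup V']
    [Module K V'] {y : V'} {s : V →ₗ[K] V'} (hs : ∀ v, s v ∈ span K {y}) :
    ∃ f : V →ₗ[K] K, s = f.smulRight y := by
  by_cases hy : y = 0
  · exact ⟨0, by ext v; simpa [hy] using hs v⟩
  obtain ⟨g, hg⟩ := Projective.exists_dual_eq_one K hy
  refine ⟨g ∘ₗ s, LinearMap.ext fun v ↦ ?_⟩
  obtain ⟨c, hc⟩ := mem_span_singleton.1 (hs v)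
  simp [← hc, hg]

theorem smulRight_left_injective {V' : Type*} [AddCommGroup V'] [Module K V'] {y : V'}
    (hy : y ≠ 0) :
    Function.Injective ((smulRightₗ : (V →ₗ[K] K) →ₗ[K] V' →ₗ[K] V →ₗ[K] V').flip y) :=
  fun _ _ hfg ↦ LinearMap.ext fun v ↦ smul_left_injective K hy (LinearMap.congr_fun hfg v)

end VectorSpace

section ScalarMap

variable {K V : Type*} [Field K] [AddCommGroup V] [Module K V]

theorem eq_smul_of_mem_span_add (hK : 3 ≤ ENat.card K) {φ : V →+ V} {e h : V} {a : K}
    (hind : LinearIndependent K ![e, h]) (hφe : φ e = a • e)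
    (hline : ∀ c : K, φ (c • e) ∈ span K {e})
    (hplane : ∀ c : K, c ≠ 0 → φ (c • e + h) ∈ span K {c • e + h}) :
    φ h = a • h ∧ ∀ c : K, φ (c • e) = a • c • e := by
  simp only [mem_span_singleton] at hline hplane
  choose f hf using hline
  choose! b hb using hplane
  have hφh : ∀ c ≠ 0, φ h = (b c * c - f c) • e + b c • h := by
    intro c hc
    calc φ h = φ (c • e + h) - φ (c • e) := by rw [map_add, add_sub_cancel_left]
      _ = b c • (c • e + h) - f c • e := by rw [hb c hc, hf]
      _ = (b c * c - f c) • e + b c • h := by module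
  have hf_affine : ∀ c ≠ 0, f c = b 1 * (c - 1) + f 1 := by
    intro c hc
    obtain ⟨hfc, hbc⟩ := hind.eq_of_pair ((hφh c hc).symm.trans (hφh 1 one_ne_zero))
    linear_combination c * hbc - hfc
  have he0 : e ≠ 0 := hind.ne_zero 0
  have hf_add (c c' : K) : f (c + c') = f c + f c' :=
    smul_left_injective K he0 (by simp only [add_smul, hf, map_add])
  have hf_one : f 1 = a := smul_left_injective K he0 (by simp only [hf, one_smul, hφe])
  -- Splitting `1 = m + (1 - m)` into nonzero scalars shows that `f` has no constant term.
  obtain ⟨m, hm0, hm1⟩ := ENat.exists_ne_ne_of_three_le hK 0 (1 : K)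
  have hb_one : b 1 = a := by
    have hsum := hf_add m (1 - m)
    rw [add_sub_cancel, hf_affine m hm0, hf_affine (1 - m) (sub_ne_zero.2 hm1.symm)] at hsum
    linear_combination hsum + hf_one
  refine ⟨by rw [hφh 1 one_ne_zero, hf_one, hb_one]; simp, fun c ↦ ?_⟩
  by_cases hc : c = 0
  · simp [hc]
  · rw [← hf, hf_affine c hc, hf_one, hb_one]
    module

theorem exists_eq_smul_of_mem_span_off_line (hK : 3 ≤ ENat.card K) {φ : V →+ V} {d : V}
    (hd : d ≠ 0) (hline : span K {d} ≠ ⊤) (hφ : ∀ y ∉ span K {d}, φ y ∈ span K {y}) :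
    ∃ a : K, ∀ y, φ y = a • y := by
  obtain ⟨e, -, he⟩ := SetLike.exists_of_lt hline.lt_top
  obtain ⟨g, hge, hgd⟩ := exists_le_ker_of_notMem he
  rw [span_singleton_le_iff_mem, mem_ker] at hgd
  have hφg : ∀ y, g y ≠ 0 → φ y ∈ span K {y} := by
    refine fun y hy ↦ hφ y fun hyd ↦ hy ?_
    obtain ⟨c, rfl⟩ := mem_span_singleton.1 hyd
    simp [hgd]
  have he0 : e ≠ 0 := by rintro rfl; simp at hge
  obtain ⟨a, ha⟩ := mem_span_singleton.1 (hφg e hge)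
  have hscalar : ∀ h, h ≠ 0 → g h = 0 → φ h = a • h ∧ ∀ c : K, φ (c • e) = a • c • e := by
    intro h hh hgh
    refine eq_smul_of_mem_span_add hK ?_ ha.symm (fun c ↦ ?_) fun c hc ↦
      hφg _ (by simp [hgh, hc, hge])
    · rw [LinearIndependent.pair_iff' he0]
      rintro c rfl
      simp_all
    · by_cases hc : c = 0
      · simp [hc]
      · rw [← span_singleton_smul_eq (IsUnit.mk0 c hc)]
        exact hφg _ (by simp [hc, hge])
  refine ⟨a, fun y ↦ ?_⟩
  have hφker : φ (y - (g y / g e) • e) = a • (y - (g y / g e) • e) := by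
    by_cases h0 : y - (g y / g e) • e = 0
    · simp [h0]
    · exact (hscalar _ h0 (by simp [hge])).1
  have hφe := (hscalar d hd hgd).2 (g y / g e)
  calc φ y = φ (y - (g y / g e) • e) + φ ((g y / g e) • e) := by rw [← map_add, sub_add_cancel]
    _ = a • y := by rw [hφker, hφe, ← smul_add, sub_add_cancel]

end ScalarMap

section Definitions

variable {K U V : Type*} [Field K] [AddCommGroup U] [Module K U] [AddCommGroup V] [Module K V]

/-- The space `Sx = {s x | s ∈ S}` of values at `x`. -/
def evalSpace (S : Submodule K (U →ₗ[K] V)) (x : U) : Submodule K V :=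
  S.map (applyₗ x)

/-- Special type `i`: some `Sx` has dimension `i`. -/
def HasSpecialType (S : Submodule K (U →ₗ[K] V)) (i : ℕ) : Prop :=
  ∃ x, finrank K (evalSpace S x) = i

/-- Locality of a map `S → V`: it is the evaluation at some vector of `U`. -/
def IsLocal {S : Submodule K (U →ₗ[K] V)} (F : S →+ V) : Prop :=
  ∃ x, ∀ s : S, F s = s.1 x

/-- Quasi-range-compatibility with respect to the line `D = K d`; for `d ≠ 0` the condition
`D ⊄ range s` is encoded as `d ∉ range s`. -/
def IsQuasiRangeCompatible {S : Submodule K (U →ₗ[K] V)} (F : S →+ V) (d : V) : Prop :=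
  ∀ s : S, d ∉ range s.1 → F s ∈ range s.1

/-- The operator space `S mod W`, obtained by composing with the projection `V → V ⧸ W`. -/
def modSubspace (S : Submodule K (U →ₗ[K] V)) (W : Submodule K V) :
    Submodule K (U →ₗ[K] V ⧸ W) :=
  S.map (compRight K W.mkQ)

theorem mem_evalSpace {S : Submodule K (U →ₗ[K] V)} {x : U} {v : V} :
    v ∈ evalSpace S x ↔ ∃ s ∈ S, s x = v :=
  Iff.rfl

theorem apply_mem_evalSpace {S : Submodule K (U →ₗ[K] V)} {s : U →ₗ[K] V} (hs : s ∈ S) (x : U) :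
    s x ∈ evalSpace S x :=
  mem_map_of_mem hs

theorem evalSpace_zero (S : Submodule K (U →ₗ[K] V)) : evalSpace S 0 = ⊥ := by
  simp [evalSpace]

theorem ne_zero_of_finrank_evalSpace_ne_zero {S : Submodule K (U →ₗ[K] V)} {x : U}
    (h : finrank K (evalSpace S x) ≠ 0) : x ≠ 0 := by
  rintro rfl
  exact h (by rw [evalSpace_zero, finrank_bot])

theorem evalSpace_modSubspace (S : Submodule K (U →ₗ[K] V)) (W : Submodule K V) (x : U) :
    evalSpace (modSubspace S W) x = (evalSpace S x).map W.mkQ := by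
  simp only [evalSpace, modSubspace, ← map_comp]
  rfl

end Definitions

section KerApply

variable {K U V : Type*} [Field K] [AddCommGroup U] [Module K U] [AddCommGroup V] [Module K V]

/-- The bilinear map `(f, y) ↦ f ⊗ y`, for linear forms `f` that vanish at `x₀`. Its values generate
the space of operators that vanish at `x₀`. -/
def rankOneOfKer (x₀ : U) : ker (applyₗ x₀ : (U →ₗ[K] K) →ₗ[K] K) →ₗ[K] V →ₗ[K]
    ker (applyₗ x₀ : (U →ₗ[K] V) →ₗ[K] V) :=
  LinearMap.mk₂ K
    (fun f y ↦ ⟨f.1.smulRight y, by rw [mem_ker, applyₗ_apply_apply, smulRight_apply,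
      show f.1 x₀ = 0 from f.2, zero_smul]⟩)
    (fun f g y ↦ by ext; simp [add_smul]) (fun c f y ↦ by ext; simp [mul_smul])
    (fun f y z ↦ by ext; simp) (fun c f y ↦ by ext; simp [smul_comm c])

variable {x₀ : U} {F : ker (applyₗ x₀ : (U →ₗ[K] V) →ₗ[K] V) →+ V} {d : V}

theorem exists_apply_rankOneOfKer_eq_smul (hK : 3 ≤ ENat.card K) (hd : d ≠ 0)
    (hline : span K {d} ≠ ⊤) (hF : IsQuasiRangeCompatible F d)
    (f : ker (applyₗ x₀ : (U →ₗ[K] K) →ₗ[K] K)) :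
    ∃ a : K, ∀ y, F (rankOneOfKer x₀ f y) = a • y := by
  refine exists_eq_smul_of_mem_span_off_line hK
    (φ := F.comp (rankOneOfKer x₀ f).toAddMonoidHom) hd hline fun y hy ↦ ?_
  have hdrange : d ∉ range (f.1.smulRight y) := by
    rintro ⟨u, rfl : f.1 u • y = d⟩
    exact hy (mem_span_singleton.2 ⟨(f.1 u)⁻¹, inv_smul_smul₀ (left_ne_zero_of_smul hd) y⟩)
  obtain ⟨u, hu⟩ := hF (rankOneOfKer x₀ f y) hdrange
  exact mem_span_singleton.2 ⟨f.1 u, hu⟩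

theorem exists_apply_rankOneOfKer_eq [FiniteDimensional K U] (hK : 3 ≤ ENat.card K) (hd : d ≠ 0)
    (hline : span K {d} ≠ ⊤) (hF : IsQuasiRangeCompatible F d) :
    ∃ x : U, ∀ f y, F (rankOneOfKer x₀ f y) = f.1 x • y := by
  choose a ha using exists_apply_rankOneOfKer_eq_smul hK hd hline hF
  let α : ker (applyₗ x₀ : (U →ₗ[K] K) →ₗ[K] K) →ₗ[K] K :=
    { toFun := a
      map_add' := fun f g ↦ smul_left_injective K hd <| by
        simp only [add_smul, ← ha, map_add, LinearMap.add_apply]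
      map_smul' := fun c f ↦ smul_left_injective K hd <| by
        simp only [RingHom.id_apply, smul_eq_mul, mul_comm c, mul_smul, ← ha, map_smul,
          LinearMap.smul_apply] }
  obtain ⟨β, hβ⟩ := α.exists_extend
  obtain ⟨x, rfl⟩ := (evalEquiv K U).surjective β
  exact ⟨x, fun f y ↦ (ha f y).trans (congrArg (· • y) (LinearMap.congr_fun hβ f).symm)⟩

theorem isLocal_of_ker_applyₗ [FiniteDimensional K U] [FiniteDimensional K V]
    (hK : 3 ≤ ENat.card K) (hd : d ≠ 0) (hline : span K {d} ≠ ⊤)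
    (hF : IsQuasiRangeCompatible F d) : IsLocal F := by
  obtain ⟨x, hx⟩ := exists_apply_rankOneOfKer_eq hK hd hline hF
  refine ⟨x, fun s ↦ ?_⟩
  let b := finBasis K V
  have hs0 : s.1 x₀ = 0 := s.2
  let f (i) : ker (applyₗ x₀ : (U →ₗ[K] K) →ₗ[K] K) := ⟨b.coord i ∘ₗ s.1, by simp [hs0]⟩
  have hsum : s = ∑ i, rankOneOfKer x₀ (f i) (b i) := by
    ext u
    rw [AddSubmonoidClass.coe_finsetSum, LinearMap.sum_apply]
    exact (b.sum_repr (s.1 u)).symm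
  calc F s = ∑ i, F (rankOneOfKer x₀ (f i) (b i)) := by rw [← map_sum, ← hsum]
    _ = ∑ i, b.repr (s.1 x) i • b i := Finset.sum_congr rfl fun i _ ↦ hx (f i) (b i)
    _ = s.1 x := b.sum_repr (s.1 x)

end KerApply

section TraceOrthogonal

variable {K U V : Type*} [Field K] [AddCommGroup U] [Module K U] [AddCommGroup V] [Module K V]

/-- The trace form `(s, t) ↦ tr (s ∘ t)`, pairing `L(U,V)` with `L(V,U)`. -/
noncomputable def tracePairing (K U V : Type*) [Field K] [AddCommGroup U] [Module K U]
    [AddCommGroup V] [Module K V] : (U →ₗ[K] V) →ₗ[K] Dual K (V →ₗ[K] U) :=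
  (llcomp K V U V).compr₂ (trace K V)

/-- The orthogonal of `S` for the trace form; its dimension is the codimension of `S`. -/
noncomputable def traceOrthogonal (S : Submodule K (U →ₗ[K] V)) : Submodule K (V →ₗ[K] U) :=
  (S.map (tracePairing K U V)).dualCoannihilator

variable {S : Submodule K (U →ₗ[K] V)}

theorem mem_traceOrthogonal {t : V →ₗ[K] U} :
    t ∈ traceOrthogonal S ↔ ∀ s ∈ S, trace K V (s ∘ₗ t) = 0 := by
  simp only [traceOrthogonal, mem_dualCoannihilator, mem_map, forall_exists_index, and_imp,
    forall_apply_eq_imp_iff₂]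
  rfl

variable [FiniteDimensional K V]

theorem trace_comp_smulRight (s : U →ₗ[K] V) (g : V →ₗ[K] K) (x : U) :
    trace K V (s ∘ₗ g.smulRight x) = g (s x) := by
  rw [show s ∘ₗ g.smulRight x = g.smulRight (s x) by ext; simp, trace_smulRight]

theorem smulRight_mem_traceOrthogonal {g : V →ₗ[K] K} {x : U} :
    g.smulRight x ∈ traceOrthogonal S ↔ g ∈ (evalSpace S x).dualAnnihilator := by
  simp only [mem_traceOrthogonal, trace_comp_smulRight, evalSpace, mem_dualAnnihilator,
    mem_map, forall_exists_index, and_imp, forall_apply_eq_imp_iff₂, applyₗ_apply_apply]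

theorem tracePairing_injective : Function.Injective (tracePairing K U V) := by
  rw [injective_iff_map_eq_zero]
  intro s hs
  ext x
  rw [LinearMap.zero_apply, ← forall_dual_apply_eq_zero_iff K]
  intro g
  rw [← trace_comp_smulRight]
  exact LinearMap.congr_fun hs (g.smulRight x)

theorem mem_traceOrthogonal_modSubspace {W : Submodule K V} {t : V ⧸ W →ₗ[K] U} :
    t ∈ traceOrthogonal (modSubspace S W) ↔ t ∘ₗ W.mkQ ∈ traceOrthogonal S := by
  simp only [mem_traceOrthogonal, modSubspace, mem_map, forall_exists_index, and_imp,
    forall_apply_eq_imp_iff₂]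
  refine forall₂_congr fun s _ ↦ ?_
  rw [← LinearMap.comp_assoc, trace_comp_comm' W.mkQ]
  rfl

theorem map_lcomp_traceOrthogonal_modSubspace (y : V) :
    (traceOrthogonal (modSubspace S (span K {y}))).map (lcomp K U (span K {y}).mkQ) =
      traceOrthogonal S ⊓ ker (applyₗ y) := by
  ext t
  constructor
  · rintro ⟨t, ht, rfl⟩
    refine ⟨mem_traceOrthogonal_modSubspace.1 ht, ?_⟩
    simp [(Submodule.Quotient.mk_eq_zero _).2 (mem_span_singleton_self y)]
  · rintro ⟨ht, hty⟩
    have hle : span K {y} ≤ ker t := (span_singleton_le_iff_mem _ _).2 hty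
    have hcomp : (span K {y}).liftQ t hle ∘ₗ (span K {y}).mkQ = t := liftQ_mkQ _ _ _
    exact ⟨_, mem_traceOrthogonal_modSubspace.2 (hcomp.symm ▸ ht), hcomp⟩

variable [FiniteDimensional K U]

theorem finrank_traceOrthogonal_modSubspace_add (S : Submodule K (U →ₗ[K] V)) (y : V) :
    finrank K (traceOrthogonal (modSubspace S (span K {y}))) +
      finrank K (evalSpace (traceOrthogonal S) y) = finrank K (traceOrthogonal S) := by
  have hinj : Function.Injective (lcomp K U (span K {y}).mkQ) := fun _ _ h ↦
    LinearMap.cancel_right (mkQ_surjective _) |>.1 h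
  rw [(equivMapOfInjective _ hinj _).finrank_eq, map_lcomp_traceOrthogonal_modSubspace, add_comm]
  exact finrank_map_add_finrank_inf_ker _ _

theorem mem_iff_forall_mem_traceOrthogonal {s : U →ₗ[K] V} :
    s ∈ S ↔ ∀ t ∈ traceOrthogonal S, trace K V (s ∘ₗ t) = 0 := by
  have hmem : s ∈ S ↔ tracePairing K U V s ∈ S.map (tracePairing K U V) :=
    tracePairing_injective.mem_set_image.symm
  rw [hmem, ← Subspace.dualCoannihilator_dualAnnihilator_eq (W := S.map _), mem_dualAnnihilator]
  rfl

theorem finrank_traceOrthogonal_add_finrank (S : Submodule K (U →ₗ[K] V)) :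
    finrank K (traceOrthogonal S) + finrank K S = finrank K (U →ₗ[K] V) := by
  rw [(equivMapOfInjective _ tracePairing_injective S).finrank_eq, add_comm, traceOrthogonal,
    Subspace.finrank_add_finrank_dualCoannihilator_eq, finrank_linearMap, finrank_linearMap,
    mul_comm]

end TraceOrthogonal

section RankOnePart

variable {K U V : Type*} [Field K] [AddCommGroup U] [Module K U] [AddCommGroup V] [Module K V]

/-- The operators `g ⊗ x` with `g` vanishing on `Sx`: these are the elements of `traceOrthogonal S`
whose range lies in `K x`. -/
def rankOnePart (S : Submodule K (U →ₗ[K] V)) (x : U) : Submodule K (V →ₗ[K] U) :=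
  (evalSpace S x).dualAnnihilator.map
    ((smulRightₗ : (V →ₗ[K] K) →ₗ[K] U →ₗ[K] V →ₗ[K] U).flip x)

variable {S : Submodule K (U →ₗ[K] V)} {x : U}

theorem apply_mem_span_of_mem_rankOnePart {t : V →ₗ[K] U} (ht : t ∈ rankOnePart S x) (v : V) :
    t v ∈ span K {x} := by
  obtain ⟨g, -, rfl⟩ := ht
  exact mem_span_singleton.2 ⟨g v, rfl⟩

theorem apply_eq_zero_of_mem_rankOnePart {t : V →ₗ[K] U} (ht : t ∈ rankOnePart S x) {v : V}
    (hv : v ∈ evalSpace S x) : t v = 0 := by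
  obtain ⟨g, hg, rfl⟩ := ht
  simp [(mem_dualAnnihilator g).1 hg v hv]

variable [FiniteDimensional K V]

theorem rankOnePart_le_traceOrthogonal (S : Submodule K (U →ₗ[K] V)) (x : U) :
    rankOnePart S x ≤ traceOrthogonal S := by
  rintro _ ⟨g, hg, rfl⟩
  exact smulRight_mem_traceOrthogonal.2 hg

theorem mem_rankOnePart_of_forall_mem_span {t : V →ₗ[K] U} (ht : t ∈ traceOrthogonal S)
    (htx : ∀ v, t v ∈ span K {x}) : t ∈ rankOnePart S x := by
  obtain ⟨g, rfl⟩ := exists_eq_smulRight_of_forall_mem_span_singleton htx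
  exact ⟨g, smulRight_mem_traceOrthogonal.1 ht, rfl⟩

theorem finrank_rankOnePart_add_finrank_evalSpace (S : Submodule K (U →ₗ[K] V)) (hx : x ≠ 0) :
    finrank K (rankOnePart S x) + finrank K (evalSpace S x) = finrank K V := by
  rw [rankOnePart, ← (equivMapOfInjective _ (smulRight_left_injective hx) _).finrank_eq, add_comm]
  exact Subspace.finrank_add_finrank_dualAnnihilator_eq _

variable [FiniteDimensional K U]

theorem not_hasSpecialType_one_of_finrank_traceOrthogonal
    (hT : finrank K (traceOrthogonal S) + 2 ≤ finrank K V) : ¬HasSpecialType S 1 := by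
  rintro ⟨x, hx⟩
  have hx0 : x ≠ 0 := ne_zero_of_finrank_evalSpace_ne_zero (hx.trans_ne one_ne_zero)
  have hdim := finrank_rankOnePart_add_finrank_evalSpace S hx0
  have hle := finrank_mono (rankOnePart_le_traceOrthogonal S x)
  omega

theorem eq_ker_applyₗ_of_forall_mem_span
    (hT : ∀ t ∈ traceOrthogonal S, ∀ v, t v ∈ span K {x}) (hx : evalSpace S x = ⊥) :
    S = ker (applyₗ x) := by
  ext s
  refine ⟨fun hs ↦ (mem_bot K).1 (hx ▸ apply_mem_evalSpace hs x), fun hs ↦ ?_⟩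
  rw [mem_iff_forall_mem_traceOrthogonal]
  intro t ht
  obtain ⟨g, rfl⟩ := exists_eq_smulRight_of_forall_mem_span_singleton (hT t ht)
  rw [trace_comp_smulRight, show s x = 0 from hs, map_zero]

theorem two_le_finrank_evalSpace_traceOrthogonal {y : V} {t : V →ₗ[K] U} (hx : x ≠ 0)
    (hy : y ∉ evalSpace S x) (ht : t ∈ traceOrthogonal S) (hty : t y ∉ span K {x}) :
    2 ≤ finrank K (evalSpace (traceOrthogonal S) y) := by
  obtain ⟨g, hgy, hg⟩ := exists_le_ker_of_notMem hy
  have hgx : g.smulRight x ∈ traceOrthogonal S :=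
    smulRight_mem_traceOrthogonal.2 ((mem_dualAnnihilator g).2 hg)
  have hmem : x ∈ evalSpace (traceOrthogonal S) y :=
    (smul_mem_iff _ hgy).1 (apply_mem_evalSpace hgx y)
  by_contra! hlt
  exact hty (le_span_singleton_of_finrank_le_one (by omega) hmem hx (apply_mem_evalSpace ht y))

/-- Here `traceOrthogonal S` is too small to contain more than the direct sum of the rank-one parts
at `x` and `x'`, and the latter vanishes at `y`. -/
theorem apply_mem_span_of_finrank_add_le {x' : U} {y : V} {t : V →ₗ[K] U} (hx : x ≠ 0)
    (hdim : finrank K (traceOrthogonal S) + finrank K (evalSpace S x) +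
      finrank K (evalSpace S x') ≤ 2 * finrank K V)
    (hyx : y ∉ evalSpace S x) (hyx' : y ∈ evalSpace S x') (ht : t ∈ traceOrthogonal S) :
    t y ∈ span K {x} := by
  have hx' : x' ∉ span K {x} := by
    intro h
    obtain ⟨c, rfl⟩ := mem_span_singleton.1 h
    obtain ⟨s, hs, rfl⟩ := mem_evalSpace.1 hyx'
    exact hyx (map_smul s c x ▸ smul_mem _ c (apply_mem_evalSpace hs x))
  have hx'0 : x' ≠ 0 := ne_of_mem_of_not_mem (zero_mem _) hx' |>.symm
  have hdisj : rankOnePart S x ⊓ rankOnePart S x' = ⊥ := by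
    refine (Submodule.eq_bot_iff _).2 fun r ⟨hr, hr'⟩ ↦ LinearMap.ext fun v ↦ ?_
    exact disjoint_def.1 ((disjoint_span_singleton' hx'0).2 hx') _
      (apply_mem_span_of_mem_rankOnePart hr v) (apply_mem_span_of_mem_rankOnePart hr' v)
  have hsup : rankOnePart S x ⊔ rankOnePart S x' = traceOrthogonal S := by
    refine eq_of_le_of_finrank_le
      (sup_le (rankOnePart_le_traceOrthogonal S x) (rankOnePart_le_traceOrthogonal S x')) ?_
    have hadd := finrank_sup_add_finrank_inf_eq (rankOnePart S x) (rankOnePart S x')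
    rw [hdisj, finrank_bot] at hadd
    have hdimx := finrank_rankOnePart_add_finrank_evalSpace S hx
    have hdimx' := finrank_rankOnePart_add_finrank_evalSpace S hx'0
    omega
  obtain ⟨a, ha, b, hb, rfl⟩ := mem_sup.1 (hsup ▸ ht)
  rw [LinearMap.add_apply, apply_eq_zero_of_mem_rankOnePart hb hyx', add_zero]
  exact apply_mem_span_of_mem_rankOnePart ha y

end RankOnePart

section RankOneSpace

variable {K V U : Type*} [Field K] [AddCommGroup V] [Module K V] [AddCommGroup U] [Module K U]
  [FiniteDimensional K U] {T : Submodule K (V →ₗ[K] U)} {H : Submodule K V}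

theorem evalSpace_le_of_apply_eq_zero (hK : 3 ≤ ENat.card K)
    (hT : ∀ y ∉ H, finrank K (evalSpace T y) ≤ 1) {y z : V} {t : V →ₗ[K] U} (hz : z ∉ H)
    (ht : t ∈ T) (hty : t y = 0) (htz : t z ≠ 0) : evalSpace T y ≤ evalSpace T z := by
  obtain ⟨c, hc0, hc⟩ : ∃ c : K, c ≠ 0 ∧ y + c • z ∉ H := by
    obtain ⟨m, hm0, hm1⟩ := ENat.exists_ne_ne_of_three_le hK 0 (1 : K)
    by_contra! hH
    have hsub := H.sub_mem (hH m hm0) (hH 1 one_ne_zero)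
    rw [add_sub_add_left_eq_sub, ← sub_smul, smul_mem_iff _ (sub_ne_zero.2 hm1)] at hsub
    exact hz hsub
  have hline : evalSpace T (y + c • z) ≤ evalSpace T z := by
    have hmem := apply_mem_evalSpace ht (y + c • z)
    have hval : t (y + c • z) = c • t z := by simp [hty]
    refine (le_span_singleton_of_finrank_le_one (hT _ hc) hmem
      (by simp [hval, hc0, htz])).trans ?_
    rw [span_singleton_le_iff_mem, hval]
    exact smul_mem _ c (apply_mem_evalSpace ht z)
  rintro _ ⟨s, hs, rfl⟩
  have hsy : s y = s (y + c • z) - c • s z := by simp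
  rw [applyₗ_apply_apply, hsy]
  exact sub_mem (hline (apply_mem_evalSpace hs _)) (smul_mem _ c (apply_mem_evalSpace hs z))

theorem exists_forall_apply_mem_span [FiniteDimensional K V] (hK : 3 ≤ ENat.card K) (hH : H ≠ ⊤)
    (hT : ∀ y ∉ H, finrank K (evalSpace T y) ≤ 1) (hdim : 2 ≤ finrank K T) :
    ∃ x ≠ 0, ∀ t ∈ T, ∀ v, t v ∈ span K {x} := by
  obtain ⟨t₀, ht₀, ht₀0⟩ := T.exists_mem_ne_zero_of_ne_bot (by rintro rfl; simp at hdim)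
  obtain ⟨y, hy, hy', -⟩ := exists_notMem_of_ne_top hK hH (mt ker_eq_top.1 ht₀0) hH
  obtain ⟨t₁, ⟨ht₁, ht₁y⟩, ht₁0⟩ : ∃ t₁ ∈ T ⊓ ker (applyₗ y), t₁ ≠ 0 := by
    have hker : finrank K (evalSpace T y) + _ = _ := finrank_map_add_finrank_inf_ker (applyₗ y) T
    have hTy := hT y hy
    refine exists_mem_ne_zero_of_ne_bot fun hbot ↦ ?_
    rw [hbot, finrank_bot] at hker
    omega
  have hle_of_apply_ne : ∀ z ∉ H, t₁ z ≠ 0 → evalSpace T z ≤ span K {t₀ y} := fun z hz ht₁z ↦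
    le_span_singleton_of_finrank_le_one (hT z hz)
      (evalSpace_le_of_apply_eq_zero hK hT hz ht₁ ht₁y ht₁z (apply_mem_evalSpace ht₀ y)) hy'
  have hle : ∀ w ∉ H, evalSpace T w ≤ span K {t₀ y} := by
    intro w hw
    by_cases ht₁w : t₁ w = 0
    · obtain ⟨z, hz, hz', -⟩ := exists_notMem_of_ne_top hK hH (mt ker_eq_top.1 ht₁0) hH
      exact (evalSpace_le_of_apply_eq_zero hK hT hz ht₁ ht₁w hz').trans (hle_of_apply_ne z hz hz')
    · exact hle_of_apply_ne w hw ht₁w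
  refine ⟨t₀ y, hy', fun t ht v ↦ ?_⟩
  have htop : (span K {t₀ y}).comap t = ⊤ := by
    by_contra hne
    obtain ⟨w, hw, hw', -⟩ := exists_notMem_of_ne_top hK hH hne hH
    exact hw' (hle w hw (apply_mem_evalSpace ht w))
  exact mem_comap.1 (htop ▸ mem_top)

end RankOneSpace

section Quotient

variable {K U V : Type*} [Field K] [AddCommGroup U] [Module K U] [AddCommGroup V] [Module K V]
  {S : Submodule K (U →ₗ[K] V)}

theorem exists_forall_sub_apply_mem {F : S →+ V} {d : V} {W : Submodule K V}
    (hF : IsQuasiRangeCompatible F d) (hd : d ∉ W)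
    (hW : ∀ G : modSubspace S W →+ V ⧸ W, IsQuasiRangeCompatible G (W.mkQ d) → IsLocal G) :
    ∃ x, ∀ s : S, F s - s.1 x ∈ W := by
  let π : S →+ modSubspace S W := ((compRight K W.mkQ).submoduleMap S).toAddMonoidHom
  have hπ : Function.Surjective π := submoduleMap_surjective _ S
  have hker : π.ker ≤ ((W.mkQ : V →+ V ⧸ W).comp F).ker := by
    intro s hs
    have hrange : range s.1 ≤ W := by
      rintro _ ⟨u, rfl⟩
      have hs0 : W.mkQ ∘ₗ s.1 = 0 := congrArg Subtype.val hs
      simpa using LinearMap.congr_fun hs0 u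
    have hFs : F s ∈ W := hrange (hF s fun h ↦ hd (hrange h))
    simpa [AddMonoidHom.mem_ker] using hFs
  let G := AddMonoidHom.liftOfSurjective π hπ ⟨_, hker⟩
  have hG (s : S) : G (π s) = W.mkQ (F s) :=
    AddMonoidHom.liftOfRightInverse_comp_apply _ _ _ ⟨_, hker⟩ s
  obtain ⟨x, hx⟩ := hW G fun s' hs' ↦ by
    obtain ⟨s, rfl⟩ := hπ s'
    obtain ⟨u, hu⟩ := hF s fun ⟨u, hu⟩ ↦ hs' ⟨u, congrArg W.mkQ hu⟩
    exact ⟨u, by rw [hG, ← hu]; rfl⟩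
  refine ⟨x, fun s ↦ (Submodule.Quotient.eq W).1 ?_⟩
  exact (hG s).symm.trans (hx (π s))

theorem finrank_evalSpace_modSubspace_add_finrank_inf [FiniteDimensional K V]
    (S : Submodule K (U →ₗ[K] V)) (W : Submodule K V) (x : U) :
    finrank K (evalSpace (modSubspace S W) x) + finrank K (evalSpace S x ⊓ W : Submodule K V) =
      finrank K (evalSpace S x) := by
  have hadd := finrank_map_add_finrank_inf_ker W.mkQ (evalSpace S x)
  rwa [← evalSpace_modSubspace, ker_mkQ] at hadd

theorem mem_evalSpace_and_finrank_eq_two_of_modSubspace [FiniteDimensional K V]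
    (hS : ¬HasSpecialType S 1) {x : U} {y : V}
    (hx : finrank K (evalSpace (modSubspace S (span K {y})) x) = 1) :
    y ∈ evalSpace S x ∧ finrank K (evalSpace S x) = 2 := by
  have hadd := finrank_evalSpace_modSubspace_add_finrank_inf S (span K {y}) x
  have hne : finrank K (evalSpace S x) ≠ 1 := fun h ↦ hS ⟨x, h⟩
  have hle : finrank K (evalSpace S x ⊓ span K {y} : Submodule K V) ≤ 1 :=
    finrank_le_one_of_le_span_singleton inf_le_right
  refine ⟨?_, by omega⟩
  have hinf : evalSpace S x ⊓ span K {y} ≠ ⊥ := fun h ↦ by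
    rw [h, finrank_bot] at hadd
    omega
  obtain ⟨v, ⟨hvS, hvy⟩, hv0⟩ := exists_mem_ne_zero_of_ne_bot hinf
  obtain ⟨c, rfl⟩ := mem_span_singleton.1 hvy
  exact (smul_mem_iff _ (left_ne_zero_of_smul hv0)).1 hvS

theorem evalSpace_le_of_le_sup_span [FiniteDimensional K V] {W : Submodule K V} {x : U} {y : V}
    (hW : ¬HasSpecialType (modSubspace S W) 1) (hle : evalSpace S x ≤ W ⊔ span K {y}) :
    evalSpace S x ≤ W := by
  have hmap : evalSpace (modSubspace S W) x ≤ span K {W.mkQ y} := by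
    rw [evalSpace_modSubspace]
    refine (map_mono hle).trans ?_
    rw [Submodule.map_sup, mkQ_map_self, bot_sup_eq, Submodule.map_span, Set.image_singleton]
  have hle_one : finrank K (evalSpace (modSubspace S W) x) ≤ 1 :=
    finrank_le_one_of_le_span_singleton hmap
  have hzero : finrank K (evalSpace (modSubspace S W) x) = 0 := by
    have hne : finrank K (evalSpace (modSubspace S W) x) ≠ 1 := fun h ↦ hW ⟨x, h⟩
    omega
  rw [finrank_eq_zero, evalSpace_modSubspace, ← le_bot_iff, map_le_iff_le_comap,
    comap_bot, ker_mkQ] at hzero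
  exact hzero

theorem isLocal_of_forall_sub_apply_mem [FiniteDimensional K V] {F : S →+ V} {y₁ y₂ : V}
    {x₁ x₂ : U} (h₁ : ¬HasSpecialType (modSubspace S (span K {y₁})) 1)
    (h₂ : ¬HasSpecialType (modSubspace S (span K {y₂})) 1)
    (hdisj : Disjoint (span K {y₁}) (span K {y₂})) (hx₁ : ∀ s : S, F s - s.1 x₁ ∈ span K {y₁})
    (hx₂ : ∀ s : S, F s - s.1 x₂ ∈ span K {y₂}) : IsLocal F := by
  have hle : evalSpace S (x₁ - x₂) ≤ span K {y₁} ⊔ span K {y₂} := by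
    rintro _ ⟨s, hs, rfl⟩
    have hsub : s (x₁ - x₂) = -(F ⟨s, hs⟩ - s x₁) + (F ⟨s, hs⟩ - s x₂) := by
      rw [map_sub]
      abel
    rw [applyₗ_apply_apply, hsub]
    exact add_mem (mem_sup_left (neg_mem (hx₁ ⟨s, hs⟩))) (mem_sup_right (hx₂ ⟨s, hs⟩))
  have hbot : evalSpace S (x₁ - x₂) = ⊥ := le_bot_iff.1 <|
    hdisj (evalSpace_le_of_le_sup_span h₁ hle)
      (evalSpace_le_of_le_sup_span h₂ (hle.trans_eq (sup_comm _ _)))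
  refine ⟨x₁, fun s ↦ sub_eq_zero.1 (disjoint_def.1 hdisj _ (hx₁ s) ?_)⟩
  have heq : s.1 (x₁ - x₂) = 0 := (mem_bot K).1 (hbot ▸ apply_mem_evalSpace s.2 _)
  rw [map_sub, sub_eq_zero] at heq
  exact heq ▸ hx₂ s

end Quotient

section Admissible

variable {K U V : Type*} [Field K] [AddCommGroup U] [Module K U] [FiniteDimensional K U]
  [AddCommGroup V] [Module K V] [FiniteDimensional K V]

/-- The hypotheses on `S` that are inherited by suitable quotients `S mod K y`; the codimension of
`S` is expressed as the dimension of `traceOrthogonal S`. -/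
structure IsAdmissible (S : Submodule K (U →ₗ[K] V)) : Prop where
  finrank_traceOrthogonal_add_four_le : finrank K (traceOrthogonal S) + 4 ≤ 2 * finrank K V
  not_hasSpecialType_one : ¬HasSpecialType S 1

variable {S : Submodule K (U →ₗ[K] V)}

theorem traceOrthogonal_ne_bot (hne : ∀ x, S ≠ ker (applyₗ x)) : traceOrthogonal S ≠ ⊥ := by
  intro hbot
  refine hne 0 ?_
  ext s
  simp [mem_iff_forall_mem_traceOrthogonal (S := S), hbot]

theorem IsAdmissible.three_le_finrank (hS : IsAdmissible S)
    (hne : traceOrthogonal S ≠ ⊥) : 3 ≤ finrank K V := by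
  have hpos := one_le_finrank_iff.2 hne
  have hdim := hS.finrank_traceOrthogonal_add_four_le
  omega

theorem IsAdmissible.modSubspace_of_two_le (hS : IsAdmissible S) {y : V}
    (hy : 2 ≤ finrank K (evalSpace (traceOrthogonal S) y))
    (hmod : ¬HasSpecialType (modSubspace S (span K {y})) 1) :
    IsAdmissible (modSubspace S (span K {y})) := by
  refine ⟨?_, hmod⟩
  have hy0 : y ≠ 0 := ne_zero_of_finrank_evalSpace_ne_zero (two_pos.trans_le hy).ne'
  have hV := finrank_quotient_span_singleton_add_one (K := K) hy0
  have hT := finrank_traceOrthogonal_modSubspace_add S y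
  have hdim := hS.finrank_traceOrthogonal_add_four_le
  omega

variable {H : Submodule K V}

theorem exists_isAdmissible_modSubspace_of_finrank_le (hK : 3 ≤ ENat.card K)
    (hT : finrank K (traceOrthogonal S) + 2 ≤ finrank K V) (hne : traceOrthogonal S ≠ ⊥)
    (hH : H ≠ ⊤) : ∃ y ∉ H, IsAdmissible (modSubspace S (span K {y})) := by
  obtain ⟨t, ht, ht0⟩ := exists_mem_ne_zero_of_ne_bot hne
  obtain ⟨y, hyH, hty, -⟩ := exists_notMem_of_ne_top hK hH (mt ker_eq_top.1 ht0) hH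
  have hpos : 1 ≤ finrank K (evalSpace (traceOrthogonal S) y) :=
    one_le_finrank_iff.2 ((Submodule.ne_bot_iff _).2 ⟨t y, apply_mem_evalSpace ht y, hty⟩)
  have hy0 : y ≠ 0 := ne_zero_of_finrank_evalSpace_ne_zero (one_pos.trans_le hpos).ne'
  have hV := finrank_quotient_span_singleton_add_one (K := K) hy0
  have hdim := finrank_traceOrthogonal_modSubspace_add S y
  exact ⟨y, hyH, by omega, not_hasSpecialType_one_of_finrank_traceOrthogonal (by omega)⟩

theorem exists_isAdmissible_modSubspace_of_hasSpecialType_two (hK : 3 ≤ ENat.card K)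
    (hS : IsAdmissible S) (hT : finrank K V ≤ finrank K (traceOrthogonal S) + 1)
    (htwo : HasSpecialType S 2) (hH : H ≠ ⊤) :
    ∃ y ∉ H, IsAdmissible (modSubspace S (span K {y})) := by
  obtain ⟨x, hx⟩ := htwo
  have hdim := hS.finrank_traceOrthogonal_add_four_le
  have hx0 : x ≠ 0 := ne_zero_of_finrank_evalSpace_ne_zero (hx.trans_ne two_ne_zero)
  have hSx : evalSpace S x ≠ ⊤ := fun h ↦ by
    rw [h, finrank_top] at hx
    omega
  obtain ⟨t, ht, htx⟩ : ∃ t ∈ traceOrthogonal S, t ∉ rankOnePart S x := by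
    have hrank := finrank_rankOnePart_add_finrank_evalSpace S hx0
    refine SetLike.not_le_iff_exists.1 fun hle ↦ ?_
    have hmono := finrank_mono hle
    omega
  have hcomap : (span K {x}).comap t ≠ ⊤ := fun h ↦
    htx (mem_rankOnePart_of_forall_mem_span ht fun v ↦ mem_comap.1 (h ▸ mem_top))
  obtain ⟨y, hyH, hyx, hty⟩ := exists_notMem_of_ne_top hK hH hSx hcomap
  refine ⟨y, hyH, hS.modSubspace_of_two_le
    (two_le_finrank_evalSpace_traceOrthogonal hx0 hyx ht hty) ?_⟩
  rintro ⟨x', hx'⟩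
  obtain ⟨hyx', htwo'⟩ :=
    mem_evalSpace_and_finrank_eq_two_of_modSubspace hS.not_hasSpecialType_one hx'
  exact hty (apply_mem_span_of_finrank_add_le hx0 (by omega) hyx hyx' ht)

theorem exists_isAdmissible_modSubspace_of_not_hasSpecialType_two (hK : 3 ≤ ENat.card K)
    (hS : IsAdmissible S) (hT : finrank K V ≤ finrank K (traceOrthogonal S) + 1)
    (htwo : ¬HasSpecialType S 2) (hne : ∀ x, S ≠ ker (applyₗ x)) (hH : H ≠ ⊤) :
    ∃ y ∉ H, IsAdmissible (modSubspace S (span K {y})) := by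
  obtain ⟨y, hyH, hy⟩ : ∃ y ∉ H, 2 ≤ finrank K (evalSpace (traceOrthogonal S) y) := by
    by_contra! hsmall
    have hV := hS.three_le_finrank (traceOrthogonal_ne_bot hne)
    obtain ⟨x, hx0, hx⟩ := exists_forall_apply_mem_span hK hH
      (fun y hy ↦ Nat.le_of_lt_succ (hsmall y hy)) (by omega)
    refine hne x (eq_ker_applyₗ_of_forall_mem_span hx (finrank_eq_zero.1 ?_))
    have hle := finrank_mono fun t ht ↦ mem_rankOnePart_of_forall_mem_span ht (hx t ht)
    have hrank := finrank_rankOnePart_add_finrank_evalSpace S hx0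
    have hne_one : finrank K (evalSpace S x) ≠ 1 := fun h ↦ hS.not_hasSpecialType_one ⟨x, h⟩
    omega
  refine ⟨y, hyH, hS.modSubspace_of_two_le hy fun ⟨x, hx⟩ ↦ htwo ⟨x, ?_⟩⟩
  exact (mem_evalSpace_and_finrank_eq_two_of_modSubspace hS.not_hasSpecialType_one hx).2

theorem IsAdmissible.exists_isAdmissible_modSubspace (hK : 3 ≤ ENat.card K) (hS : IsAdmissible S)
    (hne : ∀ x, S ≠ ker (applyₗ x)) (hH : H ≠ ⊤) :
    ∃ y ∉ H, IsAdmissible (modSubspace S (span K {y})) := by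
  by_cases hT : finrank K (traceOrthogonal S) + 2 ≤ finrank K V
  · exact exists_isAdmissible_modSubspace_of_finrank_le hK hT (traceOrthogonal_ne_bot hne) hH
  by_cases htwo : HasSpecialType S 2
  · exact exists_isAdmissible_modSubspace_of_hasSpecialType_two hK hS (by omega) htwo hH
  · exact exists_isAdmissible_modSubspace_of_not_hasSpecialType_two hK hS (by omega) htwo hne hH

end Admissible

theorem IsAdmissible.isLocal {K U V : Type*} [Field K] [AddCommGroup U] [Module K U]
    [FiniteDimensional K U] [AddCommGroup V] [Module K V] [FiniteDimensional K V]
    (hK : 3 ≤ ENat.card K) {S : Submodule K (U →ₗ[K] V)} (hS : IsAdmissible S) {F : S →+ V}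
    {d : V} (hd : d ≠ 0) (hF : IsQuasiRangeCompatible F d) : IsLocal F := by
  have hdim := hS.finrank_traceOrthogonal_add_four_le
  have hone_lt : 1 < finrank K V := by omega
  have hline : span K {d} ≠ ⊤ := (span_lt_top_of_card_lt_finrank (by simpa using hone_lt)).ne
  by_cases hker : ∃ x₀, S = ker (applyₗ x₀)
  · obtain ⟨x₀, rfl⟩ := hker
    exact isLocal_of_ker_applyₗ hK hd hline hF
  have hne : ∀ x₀, S ≠ ker (applyₗ x₀) := not_exists.1 hker
  have hV := hS.three_le_finrank (traceOrthogonal_ne_bot hne)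
  have hplane (y : V) : span K {d, y} ≠ ⊤ := by
    classical
    have hle := finrank_span_finset_le_card (R := K) ({d, y} : Finset V)
    rw [Finset.coe_pair] at hle
    exact (lt_top_of_finrank_lt_finrank ((hle.trans Finset.card_le_two).trans_lt hV)).ne
  have hdescent : ∀ y ∉ span K {d}, IsAdmissible (modSubspace S (span K {y})) →
      ∃ x, ∀ s : S, F s - s.1 x ∈ span K {y} := by
    intro y hy hSy
    have hy0 : y ≠ 0 := (ne_of_mem_of_not_mem (zero_mem _) hy).symm
    have hdy : d ∉ span K {y} := fun h ↦
      hd (disjoint_def.1 ((disjoint_span_singleton' hy0).2 hy) d (mem_span_singleton_self d) h)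
    exact exists_forall_sub_apply_mem hF hdy fun G hG ↦
      hSy.isLocal hK (mt (Submodule.Quotient.mk_eq_zero _).1 hdy) hG
  obtain ⟨y₁, hy₁, hS₁⟩ := hS.exists_isAdmissible_modSubspace hK hne hline
  obtain ⟨y₂, hy₂, hS₂⟩ := hS.exists_isAdmissible_modSubspace hK hne (hplane y₁)
  obtain ⟨x₁, hx₁⟩ := hdescent y₁ hy₁ hS₁
  obtain ⟨x₂, hx₂⟩ := hdescent y₂ (fun h ↦ hy₂ (span_mono (by simp) h)) hS₂
  have hdisj : Disjoint (span K {y₁}) (span K {y₂}) :=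
    (disjoint_span_singleton' (ne_of_mem_of_not_mem (zero_mem _) hy₂).symm).2 fun h ↦
      hy₂ (span_mono (by simp) h)
  exact isLocal_of_forall_sub_apply_mem hS₁.not_hasSpecialType_one hS₂.not_hasSpecialType_one
    hdisj hx₁ hx₂
termination_by finrank K V
decreasing_by
  have hquot := finrank_quotient_span_singleton_add_one (K := K) hy0
  omega

end OperatorSpace

/-- Let `K` have more than 2 elements and `S` a linear subspace of
`L(U,V)` with `codim S ≤ 2 dim V − 4`. Then either `S` has special type 1 (there is
`x ∈ U` with `dim Sx = 1`), or every quasi-range-compatible additive homomorphism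
`F : S → V` is local. -/
theorem quasi_range_compatible_hom_local_or_special_type_one
    (K U V : Type*) [Field K] (hK : 2 < Cardinal.mk K)
    [AddCommGroup U] [Module K U] [FiniteDimensional K U]
    [AddCommGroup V] [Module K V] [FiniteDimensional K V]
    (S : Submodule K (U →ₗ[K] V))
    (h1 : Module.finrank K (U →ₗ[K] V) + 4 ≤
      Module.finrank K S + 2 * Module.finrank K V) :
    (∃ x : U, Module.finrank K (Submodule.map (LinearMap.applyₗ x) S) = 1) ∨
    (∀ F : ↥S →+ V,
      (∃ D : Submodule K V, Module.finrank K D = 1 ∧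
        ∀ s : ↥S, ¬ D ≤ LinearMap.range (s : U →ₗ[K] V) →
          F s ∈ LinearMap.range (s : U →ₗ[K] V)) →
      ∃ x : U, ∀ s : ↥S, F s = (s : U →ₗ[K] V) x) := by
  have hK3 : 3 ≤ ENat.card K :=
    two_add_one_eq_three.symm.trans_le (Order.add_one_le_of_lt (Cardinal.ofNat_lt_toENat.2 hK))
  refine or_iff_not_imp_left.2 fun hone F ⟨D, hD, hF⟩ ↦ ?_
  obtain ⟨d, hdD, hd⟩ := exists_mem_ne_zero_of_ne_bot (one_le_finrank_iff.1 hD.ge)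
  have hS : OperatorSpace.IsAdmissible S := by
    refine ⟨?_, hone⟩
    have hcodim := OperatorSpace.finrank_traceOrthogonal_add_finrank S
    omega
  exact hS.isLocal hK3 hd fun s hs ↦ hF s fun hDs ↦ hs (hDs hdD)
end

section
/- Let K be a field, U a 1-dimensional K-vector space, V a finite-dimensional K-vector space, and S a linear subspace of L(U,V). Assume dim S ≥ 2 if K has more than 2 elements, and dim S ≥ 3 if K has exactly 2 elements. Then every quasi-range-compatible additive group homomorphism F : S → V is local. -/
/-!
Fix a generator `u` of `U` and let `f s = s u`, an injective linear map `S → V`. The range of `s`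
is spanned by `f s`, so the claim is that `F = l • f` for a scalar `l`, and the hypothesis gives
`F s = c • f s`, for a scalar `c` depending on `s`, for every `s` outside some line `L` of `S`.

If `v` and `w` are independent and `v`, `w`, `v + w` all have such a scalar, then the three scalars
agree. Fix `w ∉ L`, with scalar `l`. Every `v` outside `L`, `L - w` and the span of `w` then has
scalar `l` too. When `K` has more than two elements or `L` has codimension at least two, any
nonzero `x ∈ L` is a difference of two such vectors, so `F = l • f` on `L`. Comparing an arbitrary
vector outside `L` with a nonzero vector of `L` shows that its scalar is also `l`.
-/

open Submodule Cardinal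

theorem two_lt_mk_or_natCard_eq_two (α : Type*) [Nontrivial α] : 2 < #α ∨ Nat.card α = 2 := by
  have two_le : 2 ≤ #α := two_le_iff.mpr (exists_pair_ne α)
  exact two_le.lt_or_eq.imp_right fun h => by simp [Nat.card, ← h]

section Semiring

variable {K W V : Type*} [Semiring K] [AddCommMonoid W] [Module K W] [AddCommMonoid V] [Module K V]

theorem range_eq_span_singleton_of_span_singleton_eq_top {u : W} (hu : K ∙ u = ⊤) (s : W →ₗ[K] V) :
    s.range = K ∙ s u := by
  rw [LinearMap.range_eq_map, ← hu, map_span, Set.image_singleton]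

theorem span_ne_top_of_mk_lt_rank [StrongRankCondition K] {s : Set W} (hs : #s < Module.rank K W) :
    span K s ≠ ⊤ := fun h =>
  ((rank_span_le s).trans_lt hs).ne (by rw [h, rank_top])

theorem map_eq_smul_of_linearIndependent_pair {f : W →ₗ[K] V}
    (hf : Function.Injective f) {F : W →+ V} {l : K} {v w : W}
    (hvw : LinearIndependent K ![v, w]) (hw : F w = l • f w)
    (hFv : F v ∈ K ∙ f v) (hFvw : F (v + w) ∈ K ∙ f (v + w)) : F v = l • f v := by
  obtain ⟨a, ha⟩ := mem_span_singleton.mp hFv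
  obtain ⟨c, hc⟩ := mem_span_singleton.mp hFvw
  have coeff_eq : c • v + c • w = a • v + l • w := hf <| by
    rw [← smul_add, map_smul, hc, map_add, map_add, map_smul, map_smul, ha, hw]
  obtain ⟨rfl, rfl⟩ := hvw.eq_of_pair coeff_eq
  exact ha.symm

end Semiring

theorem applyₗ_injective_of_span_singleton_eq_top {K U V : Type*} [CommSemiring K]
    [AddCommMonoid U] [Module K U] [AddCommMonoid V] [Module K V] {u : U} (hu : K ∙ u = ⊤) :
    Function.Injective (LinearMap.applyₗ u : (U →ₗ[K] V) →ₗ[K] V) := fun s t hst =>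
  LinearMap.ext_on hu (by simpa using hst)

theorem exists_translates_notMem_of_sup_span_ne_top {K W : Type*} [Ring K] [AddCommGroup W]
    [Module K W] {L : Submodule K W} {w x : W} (hLw : L ⊔ K ∙ w ≠ ⊤) (hx : x ∈ L) :
    ∃ v, ∀ y ∈ ({v, v + x} : Set W), y ∉ L ∧ y + w ∉ L ∧ y ∉ K ∙ w := by
  obtain ⟨v, -, hv⟩ := SetLike.exists_of_lt hLw.lt_top
  have hw_sup : w ∈ L ⊔ K ∙ w := mem_sup_right (mem_span_singleton_self w)
  have notMem_of_notMem_sup : ∀ y ∉ L ⊔ K ∙ w, y ∉ L ∧ y + w ∉ L ∧ y ∉ K ∙ w := fun y hy =>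
    ⟨fun h => hy (mem_sup_left h),
      fun h => hy ((Submodule.add_mem_iff_left _ hw_sup).mp (mem_sup_left h)),
      fun h => hy (mem_sup_right h)⟩
  refine ⟨v, ?_⟩
  rintro y (rfl | rfl)
  · exact notMem_of_notMem_sup _ hv
  · exact notMem_of_notMem_sup _ fun h =>
      hv ((Submodule.add_mem_iff_left _ (mem_sup_left hx)).mp h)

section DivisionRing

variable {K W V : Type*} [DivisionRing K] [AddCommGroup W] [Module K W]
  [AddCommGroup V] [Module K V]

theorem linearIndependent_pair_of_notMem_of_mem {L : Submodule K W} {v w : W}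
    (hv : v ∉ L) (hw : w ∈ L) (hw0 : w ≠ 0) : LinearIndependent K ![v, w] := by
  rw [LinearIndependent.pair_symm_iff, LinearIndependent.pair_iff' hw0]
  rintro c rfl
  exact hv (L.smul_mem c hw)

variable {f : W →ₗ[K] V} {F : W →+ V} {L : Submodule K W} {l : K}

theorem map_eq_smul_of_forall_mem (hf : Function.Injective f) (hL : L ≠ ⊥)
    (hF : ∀ w ∉ L, F w ∈ K ∙ f w) (hFL : ∀ x ∈ L, F x = l • f x) (w : W) :
    F w = l • f w := by
  by_cases hw : w ∈ L
  · exact hFL w hw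
  obtain ⟨x, hx, hx0⟩ := L.ne_bot_iff.mp hL
  exact map_eq_smul_of_linearIndependent_pair hf
    (linearIndependent_pair_of_notMem_of_mem hw hx hx0) (hFL x hx) (hF w hw)
    (hF _ fun h => hw ((L.add_mem_iff_left hx).mp h))

theorem exists_translates_notMem_of_two_lt_mk (hK : 2 < #K) {w x : W} (hw : w ∉ L)
    (hx : x ∈ L) (hx0 : x ≠ 0) :
    ∃ v, ∀ y ∈ ({v, v + x} : Set W), y ∉ L ∧ y + w ∉ L ∧ y ∉ K ∙ w := by
  obtain ⟨a, ha⟩ := exists_notMem_of_length_lt [(0 : K), -1] (by simpa using hK)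
  obtain ⟨ha0, ha1⟩ : a ≠ 0 ∧ a ≠ -1 := by simpa using ha
  have ha1' : a + 1 ≠ 0 := fun h => ha1 (eq_neg_of_add_eq_zero_left h)
  have hxw : x ∉ K ∙ w := by
    intro h
    obtain ⟨c, rfl⟩ := mem_span_singleton.mp h
    exact hw ((L.smul_mem_iff (left_ne_zero_of_smul hx0)).mp hx)
  have notMem_of_ne_zero : ∀ b : K, b ≠ 0 →
      a • w + b • x ∉ L ∧ a • w + b • x + w ∉ L ∧ a • w + b • x ∉ K ∙ w := by
    intro b hb
    refine ⟨?_, ?_, ?_⟩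
    · rwa [L.add_mem_iff_left (L.smul_mem b hx), L.smul_mem_iff ha0]
    · rwa [show a • w + b • x + w = (a + 1) • w + b • x by rw [add_smul, one_smul]; abel,
        L.add_mem_iff_left (L.smul_mem b hx), L.smul_mem_iff ha1']
    · rwa [Submodule.add_mem_iff_right _ (smul_mem _ a (mem_span_singleton_self w)),
        smul_mem_iff _ hb]
  refine ⟨a • w + a • x, ?_⟩
  rintro y (rfl | rfl)
  · exact notMem_of_ne_zero a ha0
  · rw [show a • w + a • x + x = a • w + (a + 1) • x by rw [add_smul, one_smul, add_assoc]]
    exact notMem_of_ne_zero (a + 1) ha1'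

theorem exists_map_eq_smul_of_forall_notMem (hf : Function.Injective f)
    (hL_bot : L ≠ ⊥) (hL_top : L ≠ ⊤) (hKL : 2 < #K ∨ ∀ w, L ⊔ K ∙ w ≠ ⊤)
    (hF : ∀ w ∉ L, F w ∈ K ∙ f w) : ∃ l : K, ∀ w, F w = l • f w := by
  obtain ⟨w, -, hw⟩ := SetLike.exists_of_lt hL_top.lt_top
  obtain ⟨l, hl⟩ := mem_span_singleton.mp (hF w hw)
  refine ⟨l, map_eq_smul_of_forall_mem hf hL_bot hF fun x hx => ?_⟩
  obtain rfl | hx0 := eq_or_ne x 0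
  · simp
  obtain ⟨v, hv⟩ : ∃ v, ∀ y ∈ ({v, v + x} : Set W), y ∉ L ∧ y + w ∉ L ∧ y ∉ K ∙ w :=
    hKL.elim (fun hK => exists_translates_notMem_of_two_lt_mk hK hw hx hx0)
      fun hLw => exists_translates_notMem_of_sup_span_ne_top (hLw w) hx
  have hw0 : w ≠ 0 := fun h => hw (h ▸ L.zero_mem)
  have map_eq : ∀ y ∈ ({v, v + x} : Set W), F y = l • f y := fun y hy =>
    have ⟨hyL, hywL, hyw⟩ := hv y hy
    map_eq_smul_of_linearIndependent_pair hf
      (linearIndependent_pair_of_notMem_of_mem hyw (mem_span_singleton_self w) hw0)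
      hl.symm (hF y hyL) (hF _ hywL)
  calc F x = F (v + x) - F v := by rw [map_add, add_sub_cancel_left]
    _ = l • f (v + x) - l • f v := by rw [map_eq _ (by simp), map_eq _ (by simp)]
    _ = l • f x := by rw [map_add, smul_add, add_sub_cancel_left]

theorem exists_ne_zero_comap_le_span_singleton [Nontrivial W] (hf : Function.Injective f)
    {D : Submodule K V} (hD : Module.finrank K D = 1) : ∃ d ≠ 0, D.comap f ≤ K ∙ d := by
  by_cases hbot : D.comap f = ⊥
  · obtain ⟨d, hd⟩ := exists_ne (0 : W)
    exact ⟨d, hd, hbot ▸ bot_le⟩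
  obtain ⟨d, hdD, hd⟩ := (Submodule.ne_bot_iff _).mp hbot
  have hfd : (⟨f d, hdD⟩ : D) ≠ 0 := by simpa [map_eq_zero_iff f hf] using hd
  refine ⟨d, hd, fun w hw => mem_span_singleton.mpr ?_⟩
  obtain ⟨c, hc⟩ := (finrank_eq_one_iff_of_nonzero' _ hfd).mp hD ⟨f w, hw⟩
  exact ⟨c, hf (by simpa using congrArg Subtype.val hc)⟩

theorem mem_of_le_span_singleton {D : Submodule K V} (hD : D ≠ ⊥) {v : V} (hDv : D ≤ K ∙ v) :
    v ∈ D := by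
  obtain ⟨y, hy, hy0⟩ := D.ne_bot_iff.mp hD
  obtain ⟨c, rfl⟩ := mem_span_singleton.mp (hDv hy)
  exact (D.smul_mem_iff (left_ne_zero_of_smul hy0)).mp hy

theorem exists_map_eq_smul_of_forall_map_notMem (hf : Function.Injective f)
    (hrank : 2 ≤ Module.rank K W) (hK : 2 < #K ∨ 3 ≤ Module.rank K W)
    {D : Submodule K V} (hD : Module.finrank K D = 1)
    (hF : ∀ w, f w ∉ D → F w ∈ K ∙ f w) : ∃ l : K, ∀ w, F w = l • f w := by
  have : Nontrivial W := rank_pos_iff_nontrivial.mp (two_pos.trans_le hrank)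
  obtain ⟨d, hd, hDd⟩ := exists_ne_zero_comap_le_span_singleton hf hD
  refine exists_map_eq_smul_of_forall_notMem (L := K ∙ d) hf ?_ ?_ ?_
    fun w hw => hF w fun hwD => hw (hDd hwD)
  · simpa using hd
  · refine span_ne_top_of_mk_lt_rank (lt_of_lt_of_le ?_ hrank)
    rw [mk_singleton]
    exact one_lt_two
  · refine hK.imp_right fun hrank3 w => ?_
    rw [← span_insert]
    refine span_ne_top_of_mk_lt_rank (lt_of_lt_of_le ?_ hrank3)
    calc #({d, w} : Set W) ≤ #({w} : Set W) + 1 := mk_insert_le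
      _ = 2 := by rw [mk_singleton, one_add_one_eq_two]
      _ < 3 := by norm_num

end DivisionRing

theorem quasi_range_compatible_hom_is_local_of_dimU_eq_one_general
    {K U V : Type*} [Field K] [AddCommGroup U] [Module K U] [AddCommGroup V] [Module K V]
    (hU : Module.finrank K U = 1) (S : Submodule K (U →ₗ[K] V))
    (h1 : 2 < #K → 2 ≤ Module.rank K S) (h2 : Nat.card K = 2 → 3 ≤ Module.rank K S)
    (F : S →+ V)
    (hq : ∃ D : Submodule K V, Module.finrank K D = 1 ∧
      ∀ s : S, ¬ D ≤ (s : U →ₗ[K] V).range → F s ∈ (s : U →ₗ[K] V).range) :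
    ∃ x : U, ∀ s : S, F s = (s : U →ₗ[K] V) x := by
  obtain ⟨u, -, hu⟩ := finrank_eq_one_iff'.mp hU
  replace hu : K ∙ u = ⊤ := eq_top_iff'.mpr fun x => mem_span_singleton.mpr (hu x)
  obtain ⟨D, hD, hq⟩ := hq
  have hD_bot : D ≠ ⊥ := by rintro rfl; simp at hD
  let f : S →ₗ[K] V := (LinearMap.applyₗ u).domRestrict S
  have hf : Function.Injective f := (applyₗ_injective_of_span_singleton_eq_top hu).comp
    S.subtype_injective
  have hrange : ∀ s : S, (s : U →ₗ[K] V).range = K ∙ f s := fun s =>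
    range_eq_span_singleton_of_span_singleton_eq_top hu s.1
  simp only [hrange] at hq
  have hrank : 2 ≤ Module.rank K S ∧ (2 < #K ∨ 3 ≤ Module.rank K S) :=
    (two_lt_mk_or_natCard_eq_two K).elim (fun hK => ⟨h1 hK, .inl hK⟩)
      fun hK => ⟨le_trans (by norm_num) (h2 hK), .inr (h2 hK)⟩
  obtain ⟨l, hl⟩ := exists_map_eq_smul_of_forall_map_notMem hf hrank.1 hrank.2 hD
    fun s hs => hq s fun hDs => hs (mem_of_le_span_singleton hD_bot hDs)
  exact ⟨l • u, fun s => (hl s).trans (map_smul (s : U →ₗ[K] V) l u).symm⟩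

/-- Let `U` be a 1-dimensional `K`-vector space, `V` finite-dimensional,
and `S` a linear subspace of `L(U,V)` with `dim S ≥ 2` if `K` has more than 2 elements
and `dim S ≥ 3` if `K` has exactly 2 elements. Then every quasi-range-compatible
additive homomorphism `F : S → V` is local. -/
theorem quasi_range_compatible_hom_is_local_of_dimU_eq_one
    (K U V : Type*) [Field K]
    [AddCommGroup U] [Module K U] [FiniteDimensional K U]
    [AddCommGroup V] [Module K V] [FiniteDimensional K V]
    (hU : Module.finrank K U = 1)
    (S : Submodule K (U →ₗ[K] V))
    (h1 : 2 < Cardinal.mk K → 2 ≤ Module.finrank K S)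
    (h2 : Nat.card K = 2 → 3 ≤ Module.finrank K S)
    (F : ↥S →+ V)
    (hq : ∃ D : Submodule K V, Module.finrank K D = 1 ∧
      ∀ s : ↥S, ¬ D ≤ LinearMap.range (s : U →ₗ[K] V) →
        F s ∈ LinearMap.range (s : U →ₗ[K] V)) :
    ∃ x : U, ∀ s : ↥S, F s = (s : U →ₗ[K] V) x := by
  exact quasi_range_compatible_hom_is_local_of_dimU_eq_one_general hU S
    (fun hK => by rw [← Module.finrank_eq_rank]; exact_mod_cast h1 hK)
    (fun hK => by rw [← Module.finrank_eq_rank]; exact_mod_cast h2 hK) F hq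
end

section
/- Let U and V be finite-dimensional vector spaces over a field K, with dim V ≥ 2 if K has more than 2 elements, and dim V ≥ 3 if K has exactly 2 elements. Then every quasi-range-compatible additive group homomorphism F : L(U,V) → V is local. -/
/-!
For a linear form `f`, the map `v ↦ F (f ⊗ v)` is additive and sends every `v ∉ D` to a multiple
of `v`; once each of these maps is known to be a homothety, `F` is local by linearity along a
basis of `U`. The dimension hypotheses amount to `2 < #(V ⧸ D)`: there are two distinct nonzero
cosets of `D`. Eigenvectors `u`, `v` in distinct nonzero cosets have the same eigenvalue, by
comparing with `u - v` if they are independent, and otherwise by moving `v` along `D` to make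
them independent. Hence one eigenvalue serves outside `D`, and so on all of `V`, which is
additively generated by the complement of `D`.
-/

open scoped Cardinal

section Homothety

variable {K V : Type*} [DivisionRing K] [AddCommGroup V] [Module K V]

theorem map_eq_smul_of_notMem_span_singleton {G : V →+ V} {u v : V} {b : K}
    (hv : ∃ a : K, G v = a • v) (huv : ∃ c : K, G (u - v) = c • (u - v))
    (hu : G u = b • u) (hspan : u ∉ Submodule.span K {v}) : G v = b • v := by
  obtain ⟨a, ha⟩ := hv
  obtain ⟨c, hc⟩ := huv
  have relation : (b - c) • u = (a - c) • v := by
    rw [map_sub, hu, ha, smul_sub] at hc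
    rw [sub_smul, sub_smul]
    exact sub_eq_sub_iff_sub_eq_sub.1 hc
  have b_eq_c : b = c := by
    by_contra hbc
    refine hspan ((Submodule.smul_mem_iff _ (sub_ne_zero.2 hbc)).1 ?_)
    exact relation ▸ Submodule.smul_mem _ _ (Submodule.mem_span_singleton_self v)
  have smul_eq : a • v = c • v := by
    rw [b_eq_c, sub_self, zero_smul, sub_smul] at relation
    exact sub_eq_zero.1 relation.symm
  rw [ha, smul_eq, b_eq_c]

variable {D : Submodule K V}

theorem smul_notMem_span_singleton_add {e v : V} {t : K} (he : e ∈ D) (he0 : e ≠ 0)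
    (hv : v ∉ D) (ht : t ≠ 0) : t • v ∉ Submodule.span K {v + e} := by
  intro hmem
  obtain ⟨s, hs⟩ := Submodule.mem_span_singleton.1 hmem
  have relation : (t - s) • v = s • e := by
    rw [sub_smul, ← hs, smul_add, add_sub_cancel_left]
  have t_eq_s : t = s := by
    by_contra hts
    exact hv ((Submodule.smul_mem_iff _ (sub_ne_zero.2 hts)).1
      (relation ▸ D.smul_mem s he))
  rw [t_eq_s, sub_self, zero_smul] at relation
  exact smul_ne_zero (t_eq_s ▸ ht) he0 relation.symm

variable {G : V →+ V}

theorem map_eq_smul_of_map_smul_eq_smul (hD : D ≠ ⊥)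
    (hG : ∀ v ∉ D, ∃ a : K, G v = a • v) {v : V} {b t : K} (hv : v ∉ D)
    (ht0 : t ≠ 0) (ht1 : t ≠ 1) (htv : G (t • v) = b • t • v) : G v = b • v := by
  obtain ⟨e, he, he0⟩ := D.ne_bot_iff.1 hD
  have add_smul_notMem : ∀ x : K, v + x • e ∉ D := fun x h =>
    hv ((D.add_mem_iff_left (D.smul_mem x he)).1 h)
  have map_add_smul : ∀ x : K, x ≠ 0 → G (v + x • e) = b • (v + x • e) := by
    intro x hx
    have sub_notMem : t • v - (v + x • e) ∉ D := by
      intro h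
      have hmem : (t - 1) • v ∈ D := by
        rw [← sub_sub] at h
        rw [sub_smul, one_smul]
        exact (D.sub_mem_iff_left (D.smul_mem x he)).1 h
      exact hv ((D.smul_mem_iff (sub_ne_zero.2 ht1)).1 hmem)
    exact map_eq_smul_of_notMem_span_singleton (hG _ (add_smul_notMem x)) (hG _ sub_notMem) htv
      (smul_notMem_span_singleton_add (D.smul_mem x he) (smul_ne_zero hx he0) hv ht0)
  -- All three terms on the right differ from `v` by a nonzero element of `D`.
  have decomposition :
      v = (v + (1 - t) • e) - (v + (1 : K) • e) + (v + t • e) := by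
    rw [sub_smul]
    abel
  calc
    G v = G (v + (1 - t) • e) - G (v + (1 : K) • e) + G (v + t • e) := by
      rw [← map_sub, ← map_add, ← decomposition]
    _ = b • (v + (1 - t) • e) - b • (v + (1 : K) • e) + b • (v + t • e) := by
      rw [map_add_smul _ (sub_ne_zero.2 ht1.symm), map_add_smul _ one_ne_zero,
        map_add_smul _ ht0]
    _ = b • v := by rw [← smul_sub, ← smul_add, ← decomposition]

theorem map_eq_smul_of_sub_notMem (hD : D ≠ ⊥) (hG : ∀ v ∉ D, ∃ a : K, G v = a • v)
    {u v : V} {b : K} (hu : u ∉ D) (hv : v ∉ D) (huv : u - v ∉ D) (hub : G u = b • u) :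
    G v = b • v := by
  by_cases hspan : u ∈ Submodule.span K {v}
  · obtain ⟨t, rfl⟩ := Submodule.mem_span_singleton.1 hspan
    have ht0 : t ≠ 0 := by
      rintro rfl
      exact hu (by simp)
    have ht1 : t ≠ 1 := by
      rintro rfl
      exact huv (by simp)
    exact map_eq_smul_of_map_smul_eq_smul hD hG hv ht0 ht1 hub
  · exact map_eq_smul_of_notMem_span_singleton (hG v hv) (hG _ huv) hub hspan

theorem exists_notMem_notMem_sub_notMem (hcard : 2 < #(V ⧸ D)) :
    ∃ u v : V, u ∉ D ∧ v ∉ D ∧ u - v ∉ D := by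
  have hthree : 3 ≤ #(V ⧸ D) := by
    rw [← two_add_one_eq_three]
    exact Cardinal.natCast_add_one_le_iff.2 hcard
  obtain ⟨p, hp, -⟩ := Cardinal.exists_ne_ne_of_three_le hthree 0 0
  obtain ⟨q, hq, hqp⟩ := Cardinal.exists_ne_ne_of_three_le hthree 0 p
  obtain ⟨v, rfl⟩ := D.mkQ_surjective p
  obtain ⟨u, rfl⟩ := D.mkQ_surjective q
  refine ⟨u, v, ?_, ?_, ?_⟩
  · simpa using hq
  · simpa using hp
  · simpa [sub_eq_zero, Submodule.Quotient.eq] using hqp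

theorem exists_forall_map_eq_smul (hD : D ≠ ⊥) (hcard : 2 < #(V ⧸ D))
    (hG : ∀ v ∉ D, ∃ a : K, G v = a • v) : ∃ b : K, ∀ v, G v = b • v := by
  obtain ⟨u, v, hu, hv, huv⟩ := exists_notMem_notMem_sub_notMem hcard
  obtain ⟨b, hub⟩ := hG u hu
  have hvb : G v = b • v := map_eq_smul_of_sub_notMem hD hG hu hv huv hub
  have off_D : ∀ w ∉ D, G w = b • w := by
    intro w hw
    by_cases huw : u - w ∈ D
    · have hvw : v - w ∉ D := fun h => huv (by simpa using D.sub_mem huw h)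
      exact map_eq_smul_of_sub_notMem hD hG hv hw hvw hvb
    · exact map_eq_smul_of_sub_notMem hD hG hu hw huw hub
  refine ⟨b, fun w => ?_⟩
  by_cases hw : w ∈ D
  · have hwu : w + u ∉ D := fun h => hu ((D.add_mem_iff_right hw).1 h)
    calc
      G w = G (w + u) - G u := by rw [map_add, add_sub_cancel_right]
      _ = b • w := by rw [off_D _ hwu, hub, smul_add, add_sub_cancel_right]
  · exact off_D w hw

end Homothety

section RankOne

variable {K U V : Type*} [DivisionRing K] [AddCommGroup U] [Module K U]
  [AddCommGroup V] [Module K V]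

theorem not_le_span_singleton_of_notMem {D : Submodule K V} {v : V} (hD : D ≠ ⊥) (hv : v ∉ D) :
    ¬ D ≤ Submodule.span K {v} := by
  intro hle
  obtain ⟨e, he, he0⟩ := D.ne_bot_iff.1 hD
  obtain ⟨c, rfl⟩ := Submodule.mem_span_singleton.1 (hle he)
  exact hv ((D.smul_mem_iff (left_ne_zero_of_smul he0)).1 he)

theorem range_smulRight_le_span_singleton (f : U →ₗ[K] K) (v : V) :
    LinearMap.range (f.smulRight v) ≤ Submodule.span K {v} := by
  rintro _ ⟨u, rfl⟩
  exact Submodule.smul_mem _ _ (Submodule.mem_span_singleton_self v)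

theorem eq_sum_coord_smulRight {ι : Type*} [Fintype ι] (B : Module.Basis ι K U)
    (s : U →ₗ[K] V) : s = ∑ i, (B.coord i).smulRight (s (B i)) := by
  classical
  refine B.ext fun j => ?_
  simp [Finsupp.single_apply, ite_smul]

theorem exists_forall_map_smulRight_eq_smul {D : Submodule K V} (hD : D ≠ ⊥)
    (hcard : 2 < #(V ⧸ D)) {F : (U →ₗ[K] V) →+ V}
    (hF : ∀ s : U →ₗ[K] V, ¬ D ≤ LinearMap.range s → F s ∈ LinearMap.range s)
    (f : U →ₗ[K] K) : ∃ b : K, ∀ v, F (f.smulRight v) = b • v := by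
  let G : V →+ V := F.comp (AddMonoidHom.mk' f.smulRight fun v w => by ext u; simp)
  refine exists_forall_map_eq_smul (G := G) hD hcard fun v hv => ?_
  have hrange := range_smulRight_le_span_singleton f v
  have hGv : G v ∈ Submodule.span K {v} :=
    hrange (hF _ fun hle => not_le_span_singleton_of_notMem hD hv (hle.trans hrange))
  obtain ⟨a, ha⟩ := Submodule.mem_span_singleton.1 hGv
  exact ⟨a, ha.symm⟩

end RankOne

theorem two_lt_cardinalMk_of_finrank {K W : Type*} [DivisionRing K] [AddCommGroup W] [Module K W]
    [FiniteDimensional K W] (h1 : 2 < #K → 1 ≤ Module.finrank K W)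
    (h2 : Nat.card K = 2 → 2 ≤ Module.finrank K W) : 2 < #W := by
  have two_lt_pow : 2 < #K ^ Module.finrank K W := by
    have two_le : 2 ≤ #K :=
      Cardinal.two_le_iff_one_lt.2 (Cardinal.one_lt_iff_nontrivial.2 inferInstance)
    rcases two_le.lt_or_eq with two_lt | two_eq
    · exact two_lt.trans_le (le_self_pow₀ (Cardinal.one_lt_two.trans two_lt).le
        (Nat.one_le_iff_ne_zero.1 (h1 two_lt)))
    · have hrank := h2 (Cardinal.toNat_eq_ofNat.2 two_eq.symm)
      calc
        (2 : Cardinal) < 2 ^ 2 := by norm_num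
        _ ≤ 2 ^ Module.finrank K W := pow_le_pow_right₀ one_le_two hrank
        _ = #K ^ Module.finrank K W := by rw [two_eq]
  have card_eq := Cardinal.mk_congr_lift (Module.finBasis K W).equivFun.toEquiv
  rw [← Cardinal.ofNat_lt_lift_iff, card_eq, Cardinal.ofNat_lt_lift_iff]
  simpa using two_lt_pow

theorem quasi_range_compatible_hom_on_full_space_is_local_general
    {K U V : Type*} [DivisionRing K] [AddCommGroup U] [Module K U] [FiniteDimensional K U]
    [AddCommGroup V] [Module K V] {D : Submodule K V} (hD : D ≠ ⊥) (hcard : 2 < #(V ⧸ D))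
    (F : (U →ₗ[K] V) →+ V)
    (hF : ∀ s : U →ₗ[K] V, ¬ D ≤ LinearMap.range s → F s ∈ LinearMap.range s) :
    ∃ x : U, ∀ s : U →ₗ[K] V, F s = s x := by
  let B := Module.finBasis K U
  choose b hb using fun i => exists_forall_map_smulRight_eq_smul hD hcard hF (B.coord i)
  refine ⟨∑ i, b i • B i, fun s => ?_⟩
  calc
    F s = ∑ i, F ((B.coord i).smulRight (s (B i))) := by
      rw [← map_sum, ← eq_sum_coord_smulRight]
    _ = s (∑ i, b i • B i) := by simp only [hb, map_sum, map_smul]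

/-- Let `U` and `V` be finite-dimensional vector spaces over a field
`K`, with `dim V ≥ 2` if `K` has more than 2 elements and `dim V ≥ 3` if `K` has exactly
2 elements. Then every quasi-range-compatible additive homomorphism
`F : L(U,V) → V` is local. -/
theorem quasi_range_compatible_hom_on_full_space_is_local
    (K U V : Type*) [Field K]
    [AddCommGroup U] [Module K U] [FiniteDimensional K U]
    [AddCommGroup V] [Module K V] [FiniteDimensional K V]
    (h1 : 2 < Cardinal.mk K → 2 ≤ Module.finrank K V)
    (h2 : Nat.card K = 2 → 3 ≤ Module.finrank K V)
    (F : (U →ₗ[K] V) →+ V)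
    (hq : ∃ D : Submodule K V, Module.finrank K D = 1 ∧
      ∀ s : U →ₗ[K] V, ¬ D ≤ LinearMap.range s → F s ∈ LinearMap.range s) :
    ∃ x : U, ∀ s : U →ₗ[K] V, F s = s x := by
  obtain ⟨D, hD, hF⟩ := hq
  have hquot := D.finrank_quotient_add_finrank
  have hcard : 2 < #(V ⧸ D) := two_lt_cardinalMk_of_finrank (K := K)
    (fun hK => by linarith [h1 hK]) (fun hK => by linarith [h2 hK])
  exact quasi_range_compatible_hom_on_full_space_is_local_general
    (Submodule.one_le_finrank_iff.1 hD.ge) hcard F hF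
end

section
/- Let K be a field with more than 3 elements, let Sym₂(K) denote the linear subspace of all symmetric 2×2 matrices over K, viewed as K-linear maps K² → K², and let D₀ = {0} × K ⊆ K². Then every K-linear map F : Sym₂(K) → K² that is quasi-range-compatible with respect to D₀ is local, i.e., there exists x ∈ K² with F(M) = Mx for all M ∈ Sym₂(K). -/
/-- The linear subspace of symmetric `2 × 2` matrices over `K`. -/
def symmetricMatrices₂ (K : Type*) [Field K] :
    Submodule K (Matrix (Fin 2) (Fin 2) K) where
  carrier := {M | M.IsSymm}
  add_mem' := fun {a b} ha hb => by
    simp only [Set.mem_setOf_eq, Matrix.IsSymm, Matrix.transpose_add] at *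
    rw [ha, hb]
  zero_mem' := by simp [Set.mem_setOf_eq, Matrix.IsSymm]
  smul_mem' := fun c {M} hM => by
    simp only [Set.mem_setOf_eq, Matrix.IsSymm, Matrix.transpose_smul] at *
    rw [hM]

/-! A symmetric matrix of rank one whose range is not `{0} × K` is a multiple of `v vᵀ` with
`v = (1, t)`, and quasi-range-compatibility says exactly that `F (v vᵀ)` is parallel to `v` for
every `t`, i.e. that `t * F (v vᵀ) 0 - F (v vᵀ) 1 = 0`. The left-hand side is a polynomial in `t`
of degree at most `3`, so it is the zero polynomial once `K` has more than three elements, and the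
vanishing of its four coefficients is precisely the locality of `F`. -/

open Matrix Polynomial

section Matrices

variable {R m n : Type*} [CommSemiring R] [Fintype n]

theorem range_mulVecLin_vecMulVec_le_span_singleton (v : m → R) (w : n → R) :
    LinearMap.range (vecMulVec v w).mulVecLin ≤ Submodule.span R {v} := by
  rintro _ ⟨x, rfl⟩
  rw [mulVecLin_apply, vecMulVec_mulVec, op_smul_eq_smul]
  exact Submodule.smul_mem _ _ (Submodule.mem_span_singleton_self v)

variable {S : Submodule R (Matrix m n R)}

/-- Quasi-range-compatibility with respect to `D`. The submodule `D` is arbitrary here; in the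
paper it is a line. -/
def IsQuasiRangeCompatible (D : Submodule R (m → R)) (F : S → m → R) : Prop :=
  ∀ M : S, ¬ D ≤ LinearMap.range (M : Matrix m n R).mulVecLin →
    F M ∈ LinearMap.range (M : Matrix m n R).mulVecLin

/-- Locality of a map on a space of matrices: it is evaluation at some fixed vector. -/
def IsLocal (F : S → m → R) : Prop :=
  ∃ x : n → R, ∀ M : S, F M = (M : Matrix m n R) *ᵥ x

theorem IsQuasiRangeCompatible.apply_mem_span_singleton {D : Submodule R (m → R)}
    {F : S → m → R} (hF : IsQuasiRangeCompatible D F) {M : S} {v : m → R} {w : n → R}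
    (hM : (M : Matrix m n R) = vecMulVec v w) (hD : ¬ D ≤ Submodule.span R {v}) :
    F M ∈ Submodule.span R {v} := by
  have range_le : LinearMap.range (M : Matrix m n R).mulVecLin ≤ Submodule.span R {v} :=
    hM ▸ range_mulVecLin_vecMulVec_le_span_singleton v w
  exact range_le (hF M fun hle ↦ hD (hle.trans range_le))

end Matrices

section Lines

variable {R ι : Type*} [CommSemiring R] {v w : ι → R}

theorem mul_eq_mul_of_mem_span_singleton (hw : w ∈ Submodule.span R {v}) (i j : ι) :
    v i * w j = v j * w i := by
  obtain ⟨c, rfl⟩ := Submodule.mem_span_singleton.1 hw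
  simp only [Pi.smul_apply, smul_eq_mul]
  ring

theorem not_ker_proj_le_span_singleton [Nontrivial ι] {i : ι} (hv : v i ≠ 0) :
    ¬ LinearMap.ker (LinearMap.proj (R := R) (φ := fun _ : ι ↦ R) i) ≤ Submodule.span R {v} := by
  classical
  intro hle
  obtain ⟨j, hji⟩ := exists_ne i
  have single_mem : Pi.single j 1 ∈ Submodule.span R {v} :=
    hle (by simp [LinearMap.mem_ker, hji.symm])
  apply hv
  simpa [hji.symm] using mul_eq_mul_of_mem_span_singleton single_mem i j

end Lines

theorem cubic_eq_zero_of_forall_eval_eq_zero {R : Type*} [CommRing R] [IsDomain R]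
    (hR : 3 < Cardinal.mk R) {P : Cubic R} (hP : ∀ t, P.toPoly.eval t = 0) : P = 0 := by
  have natDegree_le : P.toPoly.natDegree ≤ 3 := natDegree_cubic_le
  rw [← Cubic.toPoly_eq_zero_iff]
  exact eq_zero_of_forall_eval_zero_of_natDegree_lt_card _ hP
    (lt_of_le_of_lt (mod_cast natDegree_le) hR)

namespace symmetricMatrices₂

variable {K : Type*} [Field K]

/-- The symmetric matrix with diagonal entries `a`, `c` and off-diagonal entry `b`; this is the
coordinate system on `Sym₂(K)`. -/
def of (a b c : K) : symmetricMatrices₂ K :=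
  ⟨!![a, b; b, c], IsSymm.ext fun i j ↦ by fin_cases i <;> fin_cases j <;> rfl⟩

theorem of_entries (M : symmetricMatrices₂ K) : of (M.1 0 0) (M.1 0 1) (M.1 1 1) = M := by
  have symm : M.1 1 0 = M.1 0 1 := IsSymm.apply (A := M.1) M.2 0 1
  ext i j
  fin_cases i <;> fin_cases j <;> simp [of, symm]

theorem of_mulVec (a b c : K) (x : Fin 2 → K) :
    (of a b c).1 *ᵥ x = ![a * x 0 + b * x 1, b * x 0 + c * x 1] := by
  ext i
  fin_cases i <;> simp [of, mulVec, dotProduct]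

theorem of_one_sq_eq_vecMulVec (t : K) : (of 1 t (t ^ 2)).1 = vecMulVec ![1, t] ![1, t] := by
  ext i j
  fin_cases i <;> fin_cases j <;> simp [of, vecMulVec_apply, sq]

theorem map_of {V : Type*} [AddCommMonoid V] [Module K V] (F : symmetricMatrices₂ K →ₗ[K] V)
    (a b c : K) : F (of a b c) = a • F (of 1 0 0) + b • F (of 0 1 0) + c • F (of 0 0 1) := by
  have of_eq : of a b c = a • of 1 0 0 + b • of 0 1 0 + c • of 0 0 1 := by
    ext i j
    fin_cases i <;> fin_cases j <;> simp [of]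
  rw [of_eq]
  simp only [map_add, map_smul]

variable (F : symmetricMatrices₂ K →ₗ[K] (Fin 2 → K))

/-- The cubic in `t` measuring how far `F (v vᵀ)` is from being parallel to `v = (1, t)`. Its
coefficients are those of `t * F (v vᵀ) 0 - F (v vᵀ) 1`. -/
def defectCubic : Cubic K where
  a := F (of 0 0 1) 0
  b := F (of 0 1 0) 0 - F (of 0 0 1) 1
  c := F (of 1 0 0) 0 - F (of 0 1 0) 1
  d := -F (of 1 0 0) 1

theorem eval_defectCubic (t : K) :
    (defectCubic F).toPoly.eval t = t * F (of 1 t (t ^ 2)) 0 - F (of 1 t (t ^ 2)) 1 := by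
  rw [map_of F 1 t]
  simp only [defectCubic, Cubic.toPoly, eval_add, eval_mul, eval_C, eval_pow, eval_X,
    Pi.add_apply, Pi.smul_apply, smul_eq_mul]
  ring

variable {F}

theorem isLocal_of_defectCubic_eq_zero (hF : defectCubic F = 0) : IsLocal F := by
  obtain ⟨ha, hb, hc, hd⟩ : F (of 0 0 1) 0 = 0 ∧ F (of 0 1 0) 0 - F (of 0 0 1) 1 = 0 ∧
      F (of 1 0 0) 0 - F (of 0 1 0) 1 = 0 ∧ -F (of 1 0 0) 1 = 0 := Cubic.ext_iff.1 hF
  refine ⟨![F (of 1 0 0) 0, F (of 0 1 0) 0], fun M ↦ ?_⟩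
  rw [← of_entries M, map_of, of_mulVec]
  ext i
  fin_cases i
  · simp [ha]
  · simp only [Fin.mk_one, Pi.add_apply, Pi.smul_apply, smul_eq_mul, cons_val_zero, cons_val_one]
    linear_combination -M.1 0 0 * hd - M.1 0 1 * hc - M.1 1 1 * hb

theorem eval_defectCubic_eq_zero
    (hF : IsQuasiRangeCompatible (LinearMap.ker (LinearMap.proj 0)) F) (t : K) :
    (defectCubic F).toPoly.eval t = 0 := by
  have parallel : F (of 1 t (t ^ 2)) ∈ Submodule.span K {![1, t]} :=
    hF.apply_mem_span_singleton (of_one_sq_eq_vecMulVec t)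
      (not_ker_proj_le_span_singleton (by simp))
  have cross_eq : F (of 1 t (t ^ 2)) 1 = t * F (of 1 t (t ^ 2)) 0 := by
    simpa using mul_eq_mul_of_mem_span_singleton parallel 0 1
  rw [eval_defectCubic, cross_eq, sub_self]

end symmetricMatrices₂

/-- Let `K` be a field with more than 3 elements, `Sym₂(K)` the space
of symmetric `2 × 2` matrices over `K` viewed as linear maps `K² → K²` (via `mulVecLin`),
and `D₀ = {0} × K ⊆ K²` (the kernel of the projection on the first coordinate). Then
every `K`-linear map `F : Sym₂(K) → K²` that is quasi-range-compatible with respect to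
`D₀` is local. -/
theorem quasi_range_compatible_linear_map_on_sym2_is_local
    (K : Type*) [Field K] (hK : 3 < Cardinal.mk K)
    (F : ↥(symmetricMatrices₂ K) →ₗ[K] (Fin 2 → K))
    (hq : ∀ M : ↥(symmetricMatrices₂ K),
      ¬ LinearMap.ker (LinearMap.proj (R := K) (φ := fun _ : Fin 2 => K) 0) ≤
          LinearMap.range (Matrix.mulVecLin (M : Matrix (Fin 2) (Fin 2) K)) →
      F M ∈ LinearMap.range (Matrix.mulVecLin (M : Matrix (Fin 2) (Fin 2) K))) :
    ∃ x : Fin 2 → K, ∀ M : ↥(symmetricMatrices₂ K),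
      F M = (M : Matrix (Fin 2) (Fin 2) K).mulVec x := by
  have eval_eq_zero : ∀ t, (symmetricMatrices₂.defectCubic F).toPoly.eval t = 0 :=
    symmetricMatrices₂.eval_defectCubic_eq_zero hq
  have defect_eq_zero : symmetricMatrices₂.defectCubic F = 0 :=
    cubic_eq_zero_of_forall_eval_eq_zero hK eval_eq_zero
  exact symmetricMatrices₂.isLocal_of_defectCubic_eq_zero defect_eq_zero
end

section
/- Let K be a field with more than 2 elements, E a finite-dimensional K-vector space, and q a quadratic form on E. Assume there exist a linear hyperplane H of E and two linear subspaces P₁ and P₂ of codimension 2 in E such that q(x) = 0 for every x ∈ E \ (H ∪ P₁ ∪ P₂). Then q = 0. -/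
/-!
For `a ≠ 0, 1`, a quadratic map `q` has a second difference with nodes `0, 1, a` in the direction
`v` that does not depend on the base point: it is `a (a - 1) • q v`. Hence `q v` is determined by
the values of `q` at `y, y + v, y + a v` for any `y`, and conversely `q x` is determined by
`q v`, `q (x + v)` and `q (x + a v)`.

If `v ∈ H`, the three proper subspaces `H`, `P₁ + K v`, `P₂ + K v` do not cover `E`, and any `y`
outside them has `y, y + v, y + a v` outside `H ∪ P₁ ∪ P₂`; so `q v = 0`. If `x ∉ H`, some `v ∈ H`
lies outside the proper subspaces `P₁ + K x` and `P₂ + K x`, so that `q` vanishes at `v`, `x + v`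
and `x + a v`, and therefore at `x`.
-/

open Cardinal Submodule

section Submodules

variable {R M : Type*} [Ring R] [AddCommGroup M] [Module R M]

theorem exists_mem_notMem_notMem_of_isCoatom {H A B : Submodule R M} (hH : IsCoatom H) {x : M}
    (hx : x ∉ H) (hA : A ≠ ⊤) (hB : B ≠ ⊤) (hxA : x ∈ A) (hxB : x ∈ B) :
    ∃ v ∈ H, v ∉ A ∧ v ∉ B := by
  have not_le {L : Submodule R M} (hL : L ≠ ⊤) (hxL : x ∈ L) : ¬ H ≤ L := fun hle ↦
    hx ((hH.le_iff_eq hL).1 hle ▸ hxL)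
  by_contra! hcover
  have hunion : (H : Set M) ⊆ A ∪ B := fun v hv ↦ or_iff_not_imp_left.2 (hcover v hv)
  exact (AddSubgroupClass.subset_union.1 hunion).elim (not_le hA hxA) (not_le hB hxB)

theorem add_smul_notMem_of_left_notMem_sup_span_singleton {P : Submodule R M} {y v : M}
    (hy : y ∉ P ⊔ R ∙ v) (t : R) : y + t • v ∉ P := by
  intro hmem
  have hv : t • v ∈ P ⊔ R ∙ v := mem_sup_right (smul_mem _ t (mem_span_singleton_self v))
  exact hy ((Submodule.add_mem_iff_left _ hv).1 (mem_sup_left hmem))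

end Submodules

section Subspaces

variable {K E : Type*} [DivisionRing K] [AddCommGroup E] [Module K E]

theorem exists_forall_add_smul_notMem {ι : Type*} {p : ι → Submodule K E} {s : Finset ι} {u : E}
    (hs : (s.card : Cardinal) < #K) (hu : ∀ i ∈ s, u ∉ p i) (w : E) :
    ∃ t : K, ∀ i ∈ s, w + t • u ∉ p i := by
  by_contra! hcover
  choose f hfs hf using hcover
  have f_injective : Function.Injective fun t ↦ (⟨f t, hfs t⟩ : s) := by
    intro t t' heq
    have hff' : f t = f t' := congrArg Subtype.val heq
    by_contra hne
    have hdiff : (t - t') • u ∈ p (f t) := by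
      have := sub_mem (hf t) (hff' ▸ hf t')
      rwa [add_sub_add_left_eq_sub, ← sub_smul] at this
    exact hu _ (hfs t) ((smul_mem_iff _ (sub_ne_zero.2 hne)).1 hdiff)
  have card_le := lift_mk_le_lift_mk_of_injective f_injective
  exact hs.not_ge (by simpa using card_le)

theorem exists_forall_notMem_of_card_le {ι : Type*} (p : ι → Submodule K E) (s : Finset ι)
    (hs : (s.card : Cardinal) ≤ #K) (hp : ∀ i ∈ s, p i ≠ ⊤) : ∃ x, ∀ i ∈ s, x ∉ p i := by
  induction s using Finset.cons_induction with
  | empty => exact ⟨0, by simp⟩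
  | cons j s hj ih =>
    simp only [Finset.forall_mem_cons] at hp ⊢
    have card_lt : (s.card : Cardinal) < #K :=
      lt_of_lt_of_le (by simp only [Finset.card_cons, Nat.cast_lt, Nat.lt_succ_self]) hs
    obtain ⟨u, hu⟩ := ih card_lt.le hp.2
    by_cases huj : u ∈ p j
    · obtain ⟨w, -, hw⟩ := SetLike.exists_of_lt hp.1.lt_top
      obtain ⟨t, ht⟩ := exists_forall_add_smul_notMem card_lt hu w
      exact ⟨w + t • u, by rwa [(p j).add_mem_iff_left (smul_mem _ t huj)], ht⟩
    · exact ⟨u, huj, hu⟩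

theorem sup_span_singleton_ne_top_of_one_lt_rank_quotient {P : Submodule K E}
    (hP : 1 < Module.rank K (E ⧸ P)) (x : E) : P ⊔ K ∙ x ≠ ⊤ := by
  contrapose! hP
  refine rank_le_one_iff.2 ⟨P.mkQ x, fun y ↦ ?_⟩
  obtain ⟨z, rfl⟩ := P.mkQ_surjective y
  obtain ⟨p, hp, r, rfl⟩ : ∃ p ∈ P, ∃ r : K, p + r • x = z := by
    have hz : z ∈ P ⊔ K ∙ x := hP ▸ mem_top
    simpa [mem_sup, mem_span_singleton] using hz
  exact ⟨r, by simpa using hp⟩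

theorem one_lt_rank_quotient_of_finrank_add_one_lt {P : Submodule K E}
    (hP : Module.finrank K P + 1 < Module.finrank K E) : 1 < Module.rank K (E ⧸ P) := by
  have : FiniteDimensional K E := Module.finite_of_finrank_pos (by omega)
  apply Module.one_lt_rank_of_one_lt_finrank
  have := P.finrank_quotient_add_finrank
  omega

theorem add_smul_notMem_of_right_notMem_sup_span_singleton {P : Submodule K E} {x v : E}
    (hv : v ∉ P ⊔ K ∙ x) {t : K} (ht : t ≠ 0) : x + t • v ∉ P := by
  have hscale : x + t • v = t • (v + t⁻¹ • x) := by
    rw [smul_add, smul_inv_smul₀ ht, add_comm]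
  rw [hscale, smul_mem_iff _ ht]
  exact add_smul_notMem_of_left_notMem_sup_span_singleton hv t⁻¹

end Subspaces

theorem quadraticMap_second_difference {R M N : Type*} [CommRing R] [AddCommGroup M]
    [AddCommGroup N] [Module R M] [Module R N] (q : QuadraticMap R M N) (a : R) (x v : M) :
    (a - 1) • q x - a • q (x + v) + q (x + a • v) = (a * (a - 1)) • q v := by
  rw [QuadraticMap.map_add q x v, QuadraticMap.map_add q x (a • v), q.map_smul, q.polar_smul_right]
  module

section QuadraticMap

variable {K E N : Type*} [Field K] [AddCommGroup E] [Module K E] [AddCommGroup N] [Module K N]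
  {q : QuadraticMap K E N} {H P₁ P₂ : Submodule K E}

theorem quadraticMap_apply_eq_zero_of_mem (hK : 3 ≤ #K) (hH : H ≠ ⊤)
    (hP₁ : 1 < Module.rank K (E ⧸ P₁)) (hP₂ : 1 < Module.rank K (E ⧸ P₂))
    (hq : ∀ x, x ∉ H → x ∉ P₁ → x ∉ P₂ → q x = 0) {v : E} (hv : v ∈ H) : q v = 0 := by
  obtain ⟨a, ha0, ha1⟩ := exists_ne_ne_of_three_le hK 0 1
  obtain ⟨y, hyH, hy₁, hy₂⟩ : ∃ y, y ∉ H ∧ y ∉ P₁ ⊔ K ∙ v ∧ y ∉ P₂ ⊔ K ∙ v := by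
    have hproper : ∀ i ∈ Finset.univ, ![H, P₁ ⊔ K ∙ v, P₂ ⊔ K ∙ v] i ≠ ⊤ := by
      simp [Fin.forall_fin_succ, hH, sup_span_singleton_ne_top_of_one_lt_rank_quotient, hP₁, hP₂]
    simpa [Fin.forall_fin_succ] using
      exists_forall_notMem_of_card_le _ Finset.univ (by simpa using hK) hproper
  have line_eq_zero (t : K) : q (y + t • v) = 0 :=
    hq _ (by rwa [H.add_mem_iff_left (smul_mem _ t hv)])
      (add_smul_notMem_of_left_notMem_sup_span_singleton hy₁ t)
      (add_smul_notMem_of_left_notMem_sup_span_singleton hy₂ t)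
  have h0 : q y = 0 := by simpa using line_eq_zero 0
  have h1 : q (y + v) = 0 := by simpa using line_eq_zero 1
  have hdiff := quadraticMap_second_difference q a y v
  simpa [h0, h1, line_eq_zero a, ha0, sub_ne_zero.2 ha1] using hdiff.symm

theorem quadraticMap_apply_eq_zero_of_notMem_isCoatom (hK : 3 ≤ #K) (hH : IsCoatom H)
    (hP₁ : 1 < Module.rank K (E ⧸ P₁)) (hP₂ : 1 < Module.rank K (E ⧸ P₂))
    (hq : ∀ x, x ∉ H → x ∉ P₁ → x ∉ P₂ → q x = 0) {x : E} (hx : x ∉ H) : q x = 0 := by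
  obtain ⟨a, ha0, ha1⟩ := exists_ne_ne_of_three_le hK 0 1
  obtain ⟨v, hvH, hv₁, hv₂⟩ : ∃ v ∈ H, v ∉ P₁ ⊔ K ∙ x ∧ v ∉ P₂ ⊔ K ∙ x :=
    exists_mem_notMem_notMem_of_isCoatom hH hx
      (sup_span_singleton_ne_top_of_one_lt_rank_quotient hP₁ x)
      (sup_span_singleton_ne_top_of_one_lt_rank_quotient hP₂ x)
      (mem_sup_right (mem_span_singleton_self x)) (mem_sup_right (mem_span_singleton_self x))
  have line_eq_zero {t : K} (ht : t ≠ 0) : q (x + t • v) = 0 :=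
    hq _ (by rwa [H.add_mem_iff_left (smul_mem _ t hvH)])
      (add_smul_notMem_of_right_notMem_sup_span_singleton hv₁ ht)
      (add_smul_notMem_of_right_notMem_sup_span_singleton hv₂ ht)
  have h1 : q (x + v) = 0 := by simpa using line_eq_zero one_ne_zero
  have hv : q v = 0 := quadraticMap_apply_eq_zero_of_mem hK hH.1 hP₁ hP₂ hq hvH
  have hdiff := quadraticMap_second_difference q a x v
  simpa [h1, hv, line_eq_zero ha0, sub_ne_zero.2 ha1] using hdiff

variable (q H P₁ P₂) in
theorem quadratic_form_eq_zero_of_vanishing_off_hyperplane_and_two_codim_two_general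
    (hK : 2 < #K) (hH : H ≠ ⊤)
    (hP₁ : 1 < Module.rank K (E ⧸ P₁)) (hP₂ : 1 < Module.rank K (E ⧸ P₂))
    (hq : ∀ x, x ∉ H → x ∉ P₁ → x ∉ P₂ → q x = 0) : q = 0 := by
  have three_le : 3 ≤ #K := two_add_one_eq_three (R := Cardinal) ▸ add_one_le_of_lt hK
  obtain ⟨H', hH', hle⟩ := (eq_top_or_exists_le_coatom H).resolve_left hH
  have hq' (x : E) (hx : x ∉ H') : x ∉ P₁ → x ∉ P₂ → q x = 0 := hq x fun hxH ↦ hx (hle hxH)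
  ext x
  by_cases hx : x ∈ H'
  · exact quadraticMap_apply_eq_zero_of_mem three_le hH'.1 hP₁ hP₂ hq' hx
  · exact quadraticMap_apply_eq_zero_of_notMem_isCoatom three_le hH' hP₁ hP₂ hq' hx

end QuadraticMap

/-- Let `K` be a field with more than 2 elements, `E` a
finite-dimensional `K`-vector space and `q` a quadratic form on `E`. Assume there are a
linear hyperplane `H` of `E` (`dim H + 1 = dim E`) and two linear subspaces `P₁`, `P₂`
of codimension 2 (`dim Pᵢ + 2 = dim E`) such that `q` vanishes on
`E \ (H ∪ P₁ ∪ P₂)`. Then `q = 0`. -/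
theorem quadratic_form_eq_zero_of_vanishing_off_hyperplane_and_two_codim_two
    (K E : Type*) [Field K] (hK : 2 < Cardinal.mk K)
    [AddCommGroup E] [Module K E] [FiniteDimensional K E]
    (q : QuadraticForm K E)
    (H P₁ P₂ : Submodule K E)
    (hH : Module.finrank K H + 1 = Module.finrank K E)
    (hP₁ : Module.finrank K P₁ + 2 = Module.finrank K E)
    (hP₂ : Module.finrank K P₂ + 2 = Module.finrank K E)
    (hq : ∀ x : E, x ∉ H → x ∉ P₁ → x ∉ P₂ → q x = 0) :
    q = 0 := by
  exact quadratic_form_eq_zero_of_vanishing_off_hyperplane_and_two_codim_two_general q H P₁ P₂ hK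
    (lt_top_of_finrank_lt_finrank (by omega)).ne
    (one_lt_rank_quotient_of_finrank_add_one_lt (by omega))
    (one_lt_rank_quotient_of_finrank_add_one_lt (by omega)) hq
end
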